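/- arXiv:1605.00479 — 3 statements merged into one kernel-verified Lean document; each statement's English description precedes it below -/
import Mathlib

section
/- Let A ∈ ℝ^{n×p} satisfy the restricted isometry property of order 2k with constant δ_{2k} ≤ 0.4663, let α > 0 and 0 < β ≤ 1/(20α). Then every k-sparse vector x₀ ∈ ℝ^p is the unique minimizer of ‖x‖₁ + β·Φ_α(x) subject to Ax = Ax₀. -/
open Finset

/-- The penalty function `φ_α(t) = α|t| / (1 + α|t|)`. -/
noncomputable def phi (α t : ℝ) : ℝ := α * |t| / (1 + α * |t|)

/-- `Φ_α(x) = ∑_i φ_α(x_i)`. -/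
noncomputable def Phi (α : ℝ) {p : ℕ} (x : Fin p → ℝ) : ℝ := ∑ i, phi α (x i)

/-- The ℓ¹ norm. -/
noncomputable def l1 {p : ℕ} (x : Fin p → ℝ) : ℝ := ∑ i, |x i|

/-- The ℓ² norm. -/
noncomputable def l2 {p : ℕ} (x : Fin p → ℝ) : ℝ := Real.sqrt (∑ i, (x i) ^ 2)

/-- `x` is `k`-sparse: its support fits inside a set of at most `k` indices. -/
def Sparse {p : ℕ} (k : ℕ) (x : Fin p → ℝ) : Prop :=
  ∃ S : Finset (Fin p), S.card ≤ k ∧ ∀ i, x i ≠ 0 → i ∈ S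

/-- `A` satisfies the restricted isometry property of order `k` with constant `δ ∈ [0,1)`. -/
def RIP {n p : ℕ} (A : Matrix (Fin n) (Fin p) ℝ) (k : ℕ) (δ : ℝ) : Prop :=
  0 ≤ δ ∧ δ < 1 ∧ ∀ x : Fin p → ℝ, Sparse k x →
    (1 - δ) * (l2 x) ^ 2 ≤ (l2 (A.mulVec x)) ^ 2 ∧
    (l2 (A.mulVec x)) ^ 2 ≤ (1 + δ) * (l2 x) ^ 2

/-!
Write `h = x - x₀`, a vector of the kernel of `A`, and let `T` carry the `k` largest entries of
`|h|`. Suppose `‖h_{Tᶜ}‖₁ ≤ ‖h_T‖₁ = kθ`. Then `h_{Tᶜ}` lies in the polytope `‖b‖_∞ ≤ θ`,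
`‖b‖₁ ≤ kθ`, on which the linear functional `⟪A h_T, A ·⟫` is minimised at a `k`-sparse vector `u`.
Since `⟪A h_T, A u⟫ ≤ ⟪A h_T, A h_{Tᶜ}⟫ = -‖A h_T‖²`, the restricted isometry bounds at
`h_T + u / 2` and at `u` give `(1 - δ) ‖h_T‖² ≤ (δ / 2) ‖u‖² ≤ (δ / 2) k θ² ≤ (δ / 2) ‖h_T‖²`,
impossible for `δ < 2 / 3`. This is the null space property for `ℓ¹`. As `f t = |t| + β φ_α t`
increases with `|t|` while `f t / |t|` decreases, comparing `f` with the line of slope `f m / m`,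
where `m` separates the entries of `|h|` on `T` from the others, carries the property over to `f`.
Since `f` is also subadditive, recovery follows.
-/

section TopSet

variable {ι R : Type*}

/-- `T` carries `k` largest values of the family `g`, and `m ≥ 0` is a threshold separating them
from the others. Fewer than `k` indices are allowed only if `m = 0`, which covers `k` larger than
the number of indices. -/
structure IsTopSet [Zero R] [LE R] (g : ι → R) (k : ℕ) (m : R) (T : Finset ι) : Prop where
  nonneg : 0 ≤ m
  card_le : #T ≤ k
  card_eq_or : #T = k ∨ m = 0
  le_of_mem : ∀ i ∈ T, m ≤ g i
  le_of_notMem : ∀ i ∉ T, g i ≤ m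

theorem IsTopSet.comp_monotoneOn {R' : Type*} [Zero R] [Preorder R] [Zero R'] [Preorder R']
    {f : R → R'} {g : ι → R} {k : ℕ} {m : R} {T : Finset ι} (hf : MonotoneOn f (Set.Ici 0))
    (hf₀ : f 0 = 0) (hg : ∀ i, 0 ≤ g i) (hT : IsTopSet g k m T) :
    IsTopSet (fun i => f (g i)) k (f m) T where
  nonneg := hf₀ ▸ hf le_rfl hT.nonneg hT.nonneg
  card_le := hT.card_le
  card_eq_or := hT.card_eq_or.imp_right fun h => (congrArg f h).trans hf₀
  le_of_mem i hi := hf hT.nonneg (hg i) (hT.le_of_mem i hi)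
  le_of_notMem i hi := hf (hg i) hT.nonneg (hT.le_of_notMem i hi)

theorem exists_isTopSet [Finite ι] [AddCommMonoid R] [LinearOrder R] [IsOrderedAddMonoid R]
    {g : ι → R} (hg : ∀ i, 0 ≤ g i) (k : ℕ) : ∃ T m, IsTopSet g k m T := by
  classical
  cases nonempty_fintype ι
  induction k with
  | zero =>
    exact ⟨∅, ∑ i, g i, Fintype.sum_nonneg hg, le_rfl, .inl rfl, by simp,
      fun i _ => single_le_sum (fun j _ => hg j) (mem_univ i)⟩
  | succ k ih =>
    obtain ⟨T, m, hT⟩ := ih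
    rcases hT.card_eq_or with hcard | hm
    · rcases Tᶜ.eq_empty_or_nonempty with hempty | hne
      · exact ⟨T, 0, le_rfl, by lia, .inr rfl, fun i _ => hg i,
          fun i hi => absurd (mem_compl.2 hi) (by simp [hempty])⟩
      · obtain ⟨j, hj, hmax⟩ := exists_max_image Tᶜ g hne
        rw [mem_compl] at hj
        have hcard' : #(insert j T) = k + 1 := by rw [card_insert_of_notMem hj, hcard]
        refine ⟨insert j T, g j, hg j, hcard'.le, .inl hcard', fun i hi => ?_, fun i hi => ?_⟩
        · rcases mem_insert.1 hi with rfl | hi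
          · exact le_rfl
          · exact (hT.le_of_notMem j hj).trans (hT.le_of_mem i hi)
        · exact hmax i (mem_compl.2 fun hiT => hi (mem_insert_of_mem hiT))
    · exact ⟨T, m, hT.nonneg, hT.card_le.trans k.le_succ, .inr hm, hT.le_of_mem, hT.le_of_notMem⟩

namespace IsTopSet

variable [CommRing R] [LinearOrder R] {g v : ι → R} {k : ℕ} {m θ : R} {S T : Finset ι}

theorem card_mul (hT : IsTopSet g k m T) : (#T : R) * m = k * m := by
  rcases hT.card_eq_or with h | h <;> simp [h]

variable [IsStrictOrderedRing R]

theorem mul_le_sum (hT : IsTopSet g k m T) : k * m ≤ ∑ i ∈ T, g i := by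
  rw [← hT.card_mul, ← nsmul_eq_mul]
  exact card_nsmul_le_sum T g m hT.le_of_mem

theorem sum_le_sum_of_card_le (hT : IsTopSet g k m T) (hS : #S ≤ k) :
    ∑ i ∈ S, g i ≤ ∑ i ∈ T, g i := by
  classical
  have hexcess : ∑ i ∈ S, (g i - m) ≤ ∑ i ∈ T, (g i - m) :=
    calc ∑ i ∈ S, (g i - m)
        ≤ ∑ i ∈ S, if i ∈ T then g i - m else 0 := sum_le_sum fun i _ => by
          split_ifs with hi
          · exact le_rfl
          · exact sub_nonpos.2 (hT.le_of_notMem i hi)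
      _ = ∑ i ∈ S ∩ T, (g i - m) := sum_ite_mem ..
      _ ≤ ∑ i ∈ T, (g i - m) := sum_le_sum_of_subset_of_nonneg inter_subset_right
          fun i hi _ => sub_nonneg.2 (hT.le_of_mem i hi)
  have hcard : #S * m ≤ #T * m := by
    rw [hT.card_mul]
    exact mul_le_mul_of_nonneg_right (by exact_mod_cast hS) hT.nonneg
  simp only [sum_sub_distrib, sum_const, nsmul_eq_mul] at hexcess
  linarith

theorem sum_mul_le [Fintype ι] (hT : IsTopSet g k m T) (hv₀ : ∀ i, 0 ≤ v i) (hvθ : ∀ i, v i ≤ θ)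
    (hsum : ∑ i, v i ≤ k * θ) : ∑ i, g i * v i ≤ θ * ∑ i ∈ T, g i := by
  classical
  have hpointwise (i : ι) : g i * v i ≤ m * v i + if i ∈ T then θ * (g i - m) else 0 := by
    split_ifs with hi
    · linarith [mul_nonneg (sub_nonneg.2 (hT.le_of_mem i hi)) (sub_nonneg.2 (hvθ i))]
    · simpa using mul_le_mul_of_nonneg_right (hT.le_of_notMem i hi) (hv₀ i)
  calc ∑ i, g i * v i
      ≤ ∑ i, (m * v i + if i ∈ T then θ * (g i - m) else 0) := sum_le_sum fun i _ => hpointwise i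
    _ = m * ∑ i, v i + θ * (∑ i ∈ T, g i - #T * m) := by
        simp only [sum_add_distrib, sum_ite_mem, univ_inter, ← mul_sum, sum_sub_distrib, sum_const,
          nsmul_eq_mul]
    _ ≤ m * (k * θ) + θ * (∑ i ∈ T, g i - #T * m) := by gcongr; exact hT.nonneg
    _ = θ * ∑ i ∈ T, g i := by rw [hT.card_mul]; ring

end IsTopSet

end TopSet

section SparsenessMeasure

/-- The nonzero sparseness measures of Gribonval and Nielsen, a class of functions `f` for which the
null space property passes from the `ℓ¹` norm to the separable penalty `∑ i, f (x i)`. Given the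
other fields, `pos` is equivalent to `f ≠ 0`. -/
structure IsSparsenessMeasure (f : ℝ → ℝ) : Prop where
  map_zero : f 0 = 0
  map_abs : ∀ t, f |t| = f t
  pos : ∀ t, 0 < t → 0 < f t
  monotoneOn : MonotoneOn f (Set.Ici 0)
  antitoneOn_div : AntitoneOn (fun t => f t / t) (Set.Ioi 0)

namespace IsSparsenessMeasure

variable {f : ℝ → ℝ} {m s t : ℝ}

theorem le_slope_mul_abs (hf : IsSparsenessMeasure f) (hm : 0 < m) (hmt : m ≤ |t|) :
    f t ≤ f m / m * |t| := by
  have ht : 0 < |t| := hm.trans_le hmt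
  rw [← hf.map_abs t, ← div_le_iff₀ ht]
  exact hf.antitoneOn_div hm ht hmt

theorem slope_mul_abs_le (hf : IsSparsenessMeasure f) (hm : 0 < m) (htm : |t| ≤ m) :
    f m / m * |t| ≤ f t := by
  rcases (abs_nonneg t).eq_or_lt with ht | ht
  · rw [← hf.map_abs t, ← ht, mul_zero, hf.map_zero]
  · rw [← hf.map_abs t, ← le_div_iff₀ ht]
    exact hf.antitoneOn_div ht hm htm

theorem add_le_of_nonneg (hf : IsSparsenessMeasure f) (hs : 0 ≤ s) (ht : 0 ≤ t) :
    f (s + t) ≤ f s + f t := by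
  rcases (add_nonneg hs ht).eq_or_lt with hst | hst
  · obtain ⟨rfl, rfl⟩ : s = 0 ∧ t = 0 := by constructor <;> linarith
    simp [hf.map_zero]
  · have hslope_s := hf.slope_mul_abs_le hst (t := s) (by rw [abs_of_nonneg hs]; linarith)
    have hslope_t := hf.slope_mul_abs_le hst (t := t) (by rw [abs_of_nonneg ht]; linarith)
    rw [abs_of_nonneg hs] at hslope_s
    rw [abs_of_nonneg ht] at hslope_t
    calc f (s + t) = f (s + t) / (s + t) * s + f (s + t) / (s + t) * t := by field_simp
      _ ≤ f s + f t := add_le_add hslope_s hslope_t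

theorem le_add_sub (hf : IsSparsenessMeasure f) (s t : ℝ) : f s ≤ f t + f (t - s) := by
  have habs : |s| ≤ |t| + |t - s| := by simpa using abs_sub t (t - s)
  calc f s = f |s| := (hf.map_abs s).symm
    _ ≤ f (|t| + |t - s|) := hf.monotoneOn (abs_nonneg s) (Set.mem_Ici.2 (by positivity)) habs
    _ ≤ f |t| + f |t - s| := hf.add_le_of_nonneg (abs_nonneg t) (abs_nonneg _)
    _ = f t + f (t - s) := by rw [hf.map_abs, hf.map_abs]

end IsSparsenessMeasure

theorem isSparsenessMeasure_abs_add_mul_phi {α β : ℝ} (hα : 0 ≤ α) (hβ : 0 ≤ β) :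
    IsSparsenessMeasure fun t => |t| + β * phi α t where
  map_zero := by simp [phi]
  map_abs t := by simp [phi]
  pos t ht := by unfold phi; positivity
  monotoneOn s hs t ht hst := by
    simp only [Set.mem_Ici] at hs ht
    have hphi : phi α s ≤ phi α t := by
      simp only [phi, abs_of_nonneg hs, abs_of_nonneg ht]
      rw [div_le_div_iff₀ (by positivity) (by positivity)]
      linarith [mul_le_mul_of_nonneg_left hst hα]
    simp only [abs_of_nonneg hs, abs_of_nonneg ht]
    gcongr
  antitoneOn_div s hs t ht hst := by
    simp only [Set.mem_Ioi] at hs ht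
    have hdiv {r : ℝ} (hr : 0 < r) : (|r| + β * phi α r) / r = 1 + β * (α / (1 + α * r)) := by
      have : 1 + α * r ≠ 0 := by positivity
      rw [phi, abs_of_pos hr]
      field_simp
    simp only [hdiv hs, hdiv ht]
    gcongr

theorem l1_add_mul_Phi {p : ℕ} (α β : ℝ) (x : Fin p → ℝ) :
    l1 x + β * Phi α x = ∑ i, (|x i| + β * phi α (x i)) := by
  rw [l1, Phi, sum_add_distrib, mul_sum]

end SparsenessMeasure

section NullSpaceProperty

open scoped Matrix

variable {ι κ : Type*} [Fintype ι] [DecidableEq ι]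

/-- The null space property of order `k` of a matrix, for the separable penalty `∑ i, f (x i)`; the
classical (`ℓ¹`) property is the case `f = |·|`. -/
def NullSpaceProperty (f : ℝ → ℝ) (A : Matrix κ ι ℝ) (k : ℕ) : Prop :=
  ∀ h : ι → ℝ, A *ᵥ h = 0 → h ≠ 0 → ∀ S : Finset ι, #S ≤ k → ∑ i ∈ S, f (h i) < ∑ i ∈ Sᶜ, f (h i)

namespace NullSpaceProperty

variable {f : ℝ → ℝ} {A : Matrix κ ι ℝ} {k : ℕ}

theorem of_abs (hA : NullSpaceProperty (|·|) A k) (hf : IsSparsenessMeasure f) :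
    NullSpaceProperty f A k := by
  intro h hAh hne S hS
  obtain ⟨T, m, hT⟩ := exists_isTopSet (fun i => abs_nonneg (h i)) k
  have habs : ∑ i ∈ T, |h i| < ∑ i ∈ Tᶜ, |h i| := hA h hAh hne T hT.card_le
  have hle_m : ∀ i ∈ Tᶜ, |h i| ≤ m := fun i hi => hT.le_of_notMem i (mem_compl.1 hi)
  have hm : 0 < m := by
    refine hT.nonneg.lt_of_ne' fun hm => ?_
    have : ∑ i ∈ Tᶜ, |h i| ≤ 0 := sum_nonpos fun i hi => hm ▸ hle_m i hi
    linarith [sum_nonneg fun i (_ : i ∈ T) => abs_nonneg (h i)]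
  have hT_lt : ∑ i ∈ T, f (h i) < ∑ i ∈ Tᶜ, f (h i) :=
    calc ∑ i ∈ T, f (h i)
        ≤ ∑ i ∈ T, f m / m * |h i| :=
          sum_le_sum fun i hi => hf.le_slope_mul_abs hm (hT.le_of_mem i hi)
      _ = f m / m * ∑ i ∈ T, |h i| := (mul_sum ..).symm
      _ < f m / m * ∑ i ∈ Tᶜ, |h i| := mul_lt_mul_of_pos_left habs (div_pos (hf.pos m hm) hm)
      _ = ∑ i ∈ Tᶜ, f m / m * |h i| := mul_sum ..
      _ ≤ ∑ i ∈ Tᶜ, f (h i) := sum_le_sum fun i hi => hf.slope_mul_abs_le hm (hle_m i hi)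
  have hST : ∑ i ∈ S, f (h i) ≤ ∑ i ∈ T, f (h i) := by
    simpa only [hf.map_abs] using
      (hT.comp_monotoneOn hf.monotoneOn hf.map_zero fun i =>
        abs_nonneg (h i)).sum_le_sum_of_card_le hS
  linarith [sum_add_sum_compl S fun i => f (h i), sum_add_sum_compl T fun i => f (h i)]

theorem sum_lt_sum (hA : NullSpaceProperty f A k) (hf : IsSparsenessMeasure f) {x x₀ : ι → ℝ}
    {S : Finset ι} (hS : #S ≤ k) (hx₀ : ∀ i, x₀ i ≠ 0 → i ∈ S) (hAx : A *ᵥ x = A *ᵥ x₀)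
    (hne : x ≠ x₀) : ∑ i, f (x₀ i) < ∑ i, f (x i) := by
  have hx₀_compl : ∀ i ∈ Sᶜ, x₀ i = 0 := fun i hi => not_imp_comm.1 (hx₀ i) (mem_compl.1 hi)
  have hnull : ∑ i ∈ S, f ((x - x₀) i) < ∑ i ∈ Sᶜ, f ((x - x₀) i) :=
    hA (x - x₀) (by rw [Matrix.mulVec_sub, hAx, sub_self]) (sub_ne_zero.2 hne) S hS
  calc ∑ i, f (x₀ i)
      = ∑ i ∈ S, f (x₀ i) :=
        (sum_subset (subset_univ S) fun i _ hi => by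
          rw [hx₀_compl i (mem_compl.2 hi), hf.map_zero]).symm
    _ ≤ ∑ i ∈ S, (f (x i) + f ((x - x₀) i)) := sum_le_sum fun i _ => hf.le_add_sub _ _
    _ = ∑ i ∈ S, f (x i) + ∑ i ∈ S, f ((x - x₀) i) := sum_add_distrib
    _ < ∑ i ∈ S, f (x i) + ∑ i ∈ Sᶜ, f ((x - x₀) i) := by gcongr
    _ = ∑ i ∈ S, f (x i) + ∑ i ∈ Sᶜ, f (x i) := by
        congr 1
        exact sum_congr rfl fun i hi => by rw [Pi.sub_apply, hx₀_compl i hi, sub_zero]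
    _ = ∑ i, f (x i) := sum_add_sum_compl S _

end NullSpaceProperty

end NullSpaceProperty

section RestrictedIsometry

open scoped Matrix

variable {n p k : ℕ} {A : Matrix (Fin n) (Fin p) ℝ} {δ θ : ℝ}

theorem l2_sq (x : Fin p → ℝ) : l2 x ^ 2 = x ⬝ᵥ x := by
  rw [l2, Real.sq_sqrt (by positivity)]
  exact sum_congr rfl fun i _ => sq (x i)

theorem Sparse.dotProduct_self_le {u : Fin p → ℝ} (hu : Sparse k u) (huθ : ∀ i, |u i| ≤ θ) :
    u ⬝ᵥ u ≤ k * θ ^ 2 := by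
  obtain ⟨S, hS, huS⟩ := hu
  calc u ⬝ᵥ u = ∑ i ∈ S, u i * u i :=
        (sum_subset (subset_univ S) fun i _ hi => by simp [not_imp_comm.1 (huS i) hi]).symm
    _ ≤ #S • θ ^ 2 := sum_le_card_nsmul _ _ _ fun i _ => by
        rw [← sq]; exact sq_le_sq' (neg_le_of_abs_le (huθ i)) (le_of_abs_le (huθ i))
    _ ≤ k * θ ^ 2 := by rw [nsmul_eq_mul]; gcongr

theorem exists_sparse_dotProduct_le (c : Fin p → ℝ) {b : Fin p → ℝ} (hbθ : ∀ i, |b i| ≤ θ)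
    (hsum : ∑ i, |b i| ≤ k * θ) :
    ∃ u, Sparse k u ∧ (∀ i, b i = 0 → u i = 0) ∧ (∀ i, |u i| ≤ θ) ∧ c ⬝ᵥ u ≤ c ⬝ᵥ b := by
  let c' : Fin p → ℝ := fun i => if b i = 0 then 0 else c i
  obtain ⟨T, m, hT⟩ := exists_isTopSet (fun i => abs_nonneg (c' i)) k
  let u : Fin p → ℝ := fun i => if i ∈ T then -(θ * SignType.sign (c' i)) else 0
  have hcu : c ⬝ᵥ u = -(θ * ∑ i ∈ T, |c' i|) := by
    have hterm (i : Fin p) : c i * u i = if i ∈ T then -(θ * |c' i|) else 0 := by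
      by_cases hb : b i = 0
      · simp [u, c', hb]
      · simp [u, c', hb, ← self_mul_sign, mul_left_comm]
    simp only [dotProduct, hterm, sum_ite_mem, univ_inter, sum_neg_distrib, mul_sum]
  have hcb : -∑ i, |c' i| * |b i| ≤ c ⬝ᵥ b := by
    rw [← sum_neg_distrib]
    refine sum_le_sum fun i _ => ?_
    by_cases hb : b i = 0
    · simp [hb]
    · simpa [c', hb, abs_mul] using neg_abs_le (c i * b i)
  refine ⟨u, ⟨T, hT.card_le, fun i hi => ?_⟩, fun i hi => ?_, fun i => ?_, ?_⟩
  · exact not_imp_comm.1 (fun hiT => if_neg hiT) hi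
  · simp [u, c', hi]
  · have hθ : 0 ≤ θ := (abs_nonneg (b i)).trans (hbθ i)
    dsimp only [u]
    split_ifs
    · rcases SignType.sign (c' i) with _ | _ | _ <;> simp [abs_of_nonneg, hθ]
    · simpa using hθ
  · rw [hcu]
    exact (neg_le_neg (hT.sum_mul_le (fun i => abs_nonneg (b i)) hbθ hsum)).trans hcb

-- The coefficient `1 / 2` makes the `‖A a‖²` terms cancel against the cross term.
theorem RIP.one_sub_mul_dotProduct_self_le {a u : Fin p → ℝ} (hA : RIP A k δ)
    (hau : Sparse k (a + (1 / 2 : ℝ) • u)) (hu : Sparse k u) (horth : a ⬝ᵥ u = 0)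
    (hcross : A *ᵥ a ⬝ᵥ A *ᵥ u ≤ -(A *ᵥ a ⬝ᵥ A *ᵥ a)) :
    (1 - δ) * (a ⬝ᵥ a) ≤ δ / 2 * (u ⬝ᵥ u) := by
  have hlower := (hA.2.2 _ hau).1
  have hupper := (hA.2.2 u hu).2
  simp only [l2_sq, Matrix.mulVec_add, Matrix.mulVec_smul, dotProduct_add, add_dotProduct,
    smul_dotProduct, dotProduct_smul, smul_eq_mul, dotProduct_comm u a, horth,
    dotProduct_comm (A *ᵥ u) (A *ᵥ a)] at hlower hupper
  linarith

theorem RIP.one_sub_mul_sum_sq_le {h : Fin p → ℝ} {T : Finset (Fin p)} (hA : RIP A (2 * k) δ)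
    (hAh : A *ᵥ h = 0) (hT : #T ≤ k) (hθ : 0 ≤ θ) (hhθ : ∀ i ∉ T, |h i| ≤ θ)
    (hsum : ∑ i ∈ Tᶜ, |h i| ≤ k * θ) :
    (1 - δ) * ∑ i ∈ T, h i ^ 2 ≤ δ / 2 * (k * θ ^ 2) := by
  let a : Fin p → ℝ := fun i => if i ∈ T then h i else 0
  let b : Fin p → ℝ := fun i => if i ∈ T then 0 else h i
  have hab : a + b = h := by ext i; by_cases hi : i ∈ T <;> simp [a, b, hi]
  have hbθ (i : Fin p) : |b i| ≤ θ := by by_cases hi : i ∈ T <;> simp [b, hi, hθ, hhθ]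
  have hb_sum : ∑ i, |b i| ≤ k * θ := by
    simpa [b, apply_ite abs, sum_ite, filter_notMem_eq_sdiff, ← compl_eq_univ_sdiff] using hsum
  obtain ⟨u, hu, hub, huθ, hle⟩ := exists_sparse_dotProduct_le ((A *ᵥ a) ᵥ* A) hbθ hb_sum
  have huT : ∀ i ∈ T, u i = 0 := fun i hi => hub i (if_pos hi)
  have hcross : A *ᵥ a ⬝ᵥ A *ᵥ u ≤ -(A *ᵥ a ⬝ᵥ A *ᵥ a) := by
    have hAb : A *ᵥ b = -(A *ᵥ a) := by
      rw [eq_neg_iff_add_eq_zero, ← Matrix.mulVec_add, add_comm, hab, hAh]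
    rwa [← dotProduct_neg, ← hAb, Matrix.dotProduct_mulVec, Matrix.dotProduct_mulVec]
  have hau : Sparse (2 * k) (a + (1 / 2 : ℝ) • u) := by
    obtain ⟨U, hU, huU⟩ := hu
    refine ⟨T ∪ U, (card_union_le T U).trans (by lia), fun i hi => ?_⟩
    by_contra hiTU
    rw [mem_union, not_or] at hiTU
    simp [a, hiTU.1, not_imp_comm.1 (huU i) hiTU.2] at hi
  have horth : a ⬝ᵥ u = 0 := sum_eq_zero fun i _ => by by_cases hi : i ∈ T <;> simp [a, hi, huT]
  have hu' : Sparse (2 * k) u := hu.imp fun U hU => ⟨hU.1.trans (by lia), hU.2⟩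
  calc (1 - δ) * ∑ i ∈ T, h i ^ 2 = (1 - δ) * (a ⬝ᵥ a) := by
        simp [a, dotProduct, sq]
    _ ≤ δ / 2 * (u ⬝ᵥ u) := hA.one_sub_mul_dotProduct_self_le hau hu' horth hcross
    _ ≤ δ / 2 * (k * θ ^ 2) := by
        have := hA.1
        gcongr
        exact hu.dotProduct_self_le huθ

theorem RIP.sum_abs_lt_sum_abs_compl {h : Fin p → ℝ} {m : ℝ} {T : Finset (Fin p)}
    (hA : RIP A (2 * k) δ) (hδ : δ < 2 / 3) (hAh : A *ᵥ h = 0) (hne : h ≠ 0)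
    (hT : IsTopSet (fun i => |h i|) k m T) : ∑ i ∈ T, |h i| < ∑ i ∈ Tᶜ, |h i| := by
  by_contra! hle
  have hs : 0 < ∑ i ∈ T, |h i| := by
    obtain ⟨j, hj⟩ := Function.ne_iff.1 hne
    have : 0 < ∑ i, |h i| :=
      sum_pos' (fun i _ => abs_nonneg (h i)) ⟨j, mem_univ j, abs_pos.2 hj⟩
    linarith [sum_add_sum_compl T fun i => |h i|]
  have hk : 0 < (k : ℝ) := by
    have := (nonempty_of_sum_ne_zero hs.ne').card_pos
    exact_mod_cast this.trans_le hT.card_le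
  obtain ⟨θ, hθ⟩ : ∃ θ, ∑ i ∈ T, |h i| = k * θ := ⟨(∑ i ∈ T, |h i|) / k, by field_simp⟩
  have hθ_pos : 0 < θ := pos_of_mul_pos_right (hθ ▸ hs) hk.le
  have hmθ : m ≤ θ := le_of_mul_le_mul_left (hT.mul_le_sum.trans_eq hθ) hk
  have hblock := hA.one_sub_mul_sum_sq_le hAh hT.card_le hθ_pos.le
    (fun i hi => (hT.le_of_notMem i hi).trans hmθ) (hle.trans_eq hθ)
  have hcauchy : k * θ ^ 2 ≤ ∑ i ∈ T, h i ^ 2 := by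
    refine le_of_mul_le_mul_left ?_ hk
    calc k * (k * θ ^ 2) = (∑ i ∈ T, |h i|) ^ 2 := by rw [hθ]; ring
      _ ≤ #T * ∑ i ∈ T, |h i| ^ 2 := sq_sum_le_card_mul_sum_sq
      _ ≤ k * ∑ i ∈ T, h i ^ 2 := by
          simp only [sq_abs]
          gcongr
          exact hT.card_le
  have hpos : 0 < k * θ ^ 2 := by positivity
  have hδ_le : 1 - δ ≤ δ / 2 := by
    refine le_of_mul_le_mul_right ?_ hpos
    exact (mul_le_mul_of_nonneg_left hcauchy (by linarith)).trans hblock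
  linarith

theorem RIP.nullSpaceProperty (hA : RIP A (2 * k) δ) (hδ : δ < 2 / 3) :
    NullSpaceProperty (|·|) A k := by
  intro h hAh hne S hS
  obtain ⟨T, m, hT⟩ := exists_isTopSet (fun i => abs_nonneg (h i)) k
  have hlt := hA.sum_abs_lt_sum_abs_compl hδ hAh hne hT
  have hST := hT.sum_le_sum_of_card_le hS
  linarith [sum_add_sum_compl S fun i => |h i|, sum_add_sum_compl T fun i => |h i|]

end RestrictedIsometry

theorem stmt1_general {n p k : ℕ} (A : Matrix (Fin n) (Fin p) ℝ) (δ : ℝ)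
    (hRIP : RIP A (2 * k) δ) (hδ : δ < 2 / 3) {f : ℝ → ℝ} (hf : IsSparsenessMeasure f)
    (x₀ : Fin p → ℝ) (hx₀ : Sparse k x₀) :
    ∀ x : Fin p → ℝ, A.mulVec x = A.mulVec x₀ → x ≠ x₀ → ∑ i, f (x₀ i) < ∑ i, f (x i) := by
  intro x hAx hne
  obtain ⟨S, hS, hx₀S⟩ := hx₀
  have hnull : NullSpaceProperty f A k := (hRIP.nullSpaceProperty hδ).of_abs hf
  exact hnull.sum_lt_sum hf hS hx₀S hAx hne

theorem stmt1 {n p k : ℕ} (A : Matrix (Fin n) (Fin p) ℝ) (δ α β : ℝ)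
    (hRIP : RIP A (2 * k) δ) (hδ : δ ≤ 0.4663)
    (hα : 0 < α) (hβ0 : 0 < β) (hβ : β ≤ 1 / (20 * α))
    (x₀ : Fin p → ℝ) (hx₀ : Sparse k x₀) :
    ∀ x : Fin p → ℝ, A.mulVec x = A.mulVec x₀ → x ≠ x₀ →
      l1 x₀ + β * Phi α x₀ < l1 x + β * Phi α x := by
  simpa only [l1_add_mul_Phi] using stmt1_general A δ hRIP (by linarith)
    (isSparsenessMeasure_abs_add_mul_phi hα.le hβ0.le) x₀ hx₀
end

section
/- Let α > 0 and β > 0 with αβ < 1. Let x₀ ∈ ℝ^p be arbitrary and let S be a set of indices of its k largest-magnitude components. If h ∈ ℝ^p satisfies ‖x₀ + h‖₁ + β·Φ_α(x₀ + h) ≤ ‖x₀‖₁ + β·Φ_α(x₀), then ‖h_{S̄}‖₁ ≤ C₁·‖h_S‖₁ + C₂·‖(x₀)_{S̄}‖₁, where C₁ = (1 + αβ)/(1 − αβ) and C₂ = 2/(1 − αβ). -/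
open Finset

/-- Restriction of a vector to an index set `S` (zero outside `S`). -/
def restr {p : ℕ} (x : Fin p → ℝ) (S : Finset (Fin p)) : Fin p → ℝ :=
  fun i => if i ∈ S then x i else 0

/-!
The penalty `φ_α` is `α`-Lipschitz, so it perturbs the `ℓ¹` norm only mildly: by the triangle
inequality, passing from `x₀` to `x₀ + h` changes the summand `|·| + β φ_α` at an index in `S` by at
least `-(1 + αβ) |hᵢ|`, and at an index outside `S` by at least `(1 - αβ) |hᵢ| - 2 |x₀ᵢ|`.
The sum of these changes is nonpositive, which is the claimed inequality up to division by `1 - αβ`.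
-/

open scoped NNReal

section SeminormedGroup

variable {E : Type*} [SeminormedAddCommGroup E] {ψ : E → ℝ} {K : ℝ≥0}

/-- The norm plus a penalty `ψ`, the objective contributed by a single coordinate. -/
def penalizedNorm (ψ : E → ℝ) (x : E) : ℝ := ‖x‖ + ψ x

theorem lipschitzWith_penalizedNorm (hψ : LipschitzWith K ψ) :
    LipschitzWith (1 + K) (penalizedNorm ψ) :=
  lipschitzWith_one_norm.add hψ

theorem penalizedNorm_le_penalizedNorm_add (hψ : LipschitzWith K ψ) (x h : E) :
    penalizedNorm ψ x ≤ penalizedNorm ψ (x + h) + (1 + K) * ‖h‖ := by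
  simpa using (lipschitzWith_penalizedNorm hψ).le_add_mul x (x + h)

theorem mul_norm_add_penalizedNorm_le (hψ : LipschitzWith K ψ) (x h : E) :
    (1 - K) * ‖h‖ + penalizedNorm ψ x ≤ penalizedNorm ψ (x + h) + 2 * ‖x‖ := by
  have norm_le : ‖h‖ ≤ ‖x + h‖ + ‖x‖ := by simpa using norm_sub_le (x + h) x
  have penalty_le : ψ x ≤ ψ (x + h) + K * ‖h‖ := by simpa using hψ.le_add_mul x (x + h)
  unfold penalizedNorm
  linarith

end SeminormedGroup

section SeparablePenalty

variable {ι : Type*} [Fintype ι] [DecidableEq ι] {E : ι → Type*}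
  [∀ i, SeminormedAddCommGroup (E i)] {ψ : ∀ i, E i → ℝ} {K : ℝ≥0}

theorem mul_sum_compl_norm_le (hψ : ∀ i, LipschitzWith K (ψ i)) (S : Finset ι) {x h : ∀ i, E i}
    (hle : ∑ i, penalizedNorm (ψ i) (x i + h i) ≤ ∑ i, penalizedNorm (ψ i) (x i)) :
    (1 - K) * ∑ i ∈ Sᶜ, ‖h i‖ ≤ (1 + K) * ∑ i ∈ S, ‖h i‖ + 2 * ∑ i ∈ Sᶜ, ‖x i‖ := by
  have on_S : ∑ i ∈ S, penalizedNorm (ψ i) (x i) ≤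
      ∑ i ∈ S, penalizedNorm (ψ i) (x i + h i) + (1 + K) * ∑ i ∈ S, ‖h i‖ := by
    rw [mul_sum, ← sum_add_distrib]
    exact sum_le_sum fun i _ ↦ penalizedNorm_le_penalizedNorm_add (hψ i) (x i) (h i)
  have off_S : (1 - K) * ∑ i ∈ Sᶜ, ‖h i‖ + ∑ i ∈ Sᶜ, penalizedNorm (ψ i) (x i) ≤
      ∑ i ∈ Sᶜ, penalizedNorm (ψ i) (x i + h i) + 2 * ∑ i ∈ Sᶜ, ‖x i‖ := by
    simp only [mul_sum, ← sum_add_distrib]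
    exact sum_le_sum fun i _ ↦ mul_norm_add_penalizedNorm_le (hψ i) (x i) (h i)
  rw [← sum_add_sum_compl S, ← sum_add_sum_compl S] at hle
  linarith

theorem stmt2_general {β : ℝ≥0} (hKβ : (K * β : ℝ) < 1) (hψ : ∀ i, LipschitzWith K (ψ i))
    (S : Finset ι) {x h : ∀ i, E i}
    (hle : ∑ i, ‖x i + h i‖ + β * ∑ i, ψ i (x i + h i) ≤ ∑ i, ‖x i‖ + β * ∑ i, ψ i (x i)) :
    ∑ i ∈ Sᶜ, ‖h i‖ ≤
      (1 + K * β) / (1 - K * β) * ∑ i ∈ S, ‖h i‖ + 2 / (1 - K * β) * ∑ i ∈ Sᶜ, ‖x i‖ := by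
  have hβψ (i : ι) : LipschitzWith (K * β) fun y ↦ (β : ℝ) * ψ i y := by
    simpa [mul_comm K, Function.comp_def] using (lipschitzWith_smul (β : ℝ)).comp (hψ i)
  have cone := mul_sum_compl_norm_le hβψ S (x := x) (h := h)
    (by simpa only [penalizedNorm, sum_add_distrib, mul_sum] using hle)
  rw [NNReal.coe_mul] at cone
  rwa [div_mul_eq_mul_div, div_mul_eq_mul_div, ← add_div, le_div_iff₀' (sub_pos.2 hKβ)]

end SeparablePenalty

theorem lipschitzWith_phi (α : ℝ≥0) : LipschitzWith α (phi α) := by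
  refine LipschitzWith.of_le_add_mul α fun s t ↦ ?_
  have one_le (r : ℝ) : 1 ≤ 1 + α * |r| := le_add_of_nonneg_right (by positivity)
  have sub_le : phi α s - phi α t ≤ α * dist s t :=
    calc phi α s - phi α t = α * (|s| - |t|) / ((1 + α * |s|) * (1 + α * |t|)) := by
          unfold phi
          field_simp
          ring
      _ ≤ α * dist s t / ((1 + α * |s|) * (1 + α * |t|)) := by
          gcongr
          exact abs_sub_abs_le_abs_sub s t
      _ ≤ α * dist s t :=
          div_le_self (by positivity) (one_le_mul_of_one_le_of_one_le (one_le s) (one_le t))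
  linarith

theorem l1_restr {p : ℕ} (x : Fin p → ℝ) (S : Finset (Fin p)) :
    l1 (restr x S) = ∑ i ∈ S, |x i| := by
  simp [l1, restr, apply_ite abs]

theorem stmt2 {p k : ℕ} (α β : ℝ) (hα : 0 < α) (hβ : 0 < β) (hαβ : α * β < 1)
    (x₀ : Fin p → ℝ) (S : Finset (Fin p)) (hcard : S.card = k)
    (hlargest : ∀ i ∈ S, ∀ j ∉ S, |x₀ j| ≤ |x₀ i|)
    (h : Fin p → ℝ)
    (hmin : l1 (x₀ + h) + β * Phi α (x₀ + h) ≤ l1 x₀ + β * Phi α x₀) :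
    l1 (restr h Sᶜ) ≤
      (1 + α * β) / (1 - α * β) * l1 (restr h S) +
      2 / (1 - α * β) * l1 (restr x₀ Sᶜ) := by
  lift α to ℝ≥0 using hα.le; lift β to ℝ≥0 using hβ.le
  simpa only [l1_restr, Real.norm_eq_abs] using
    stmt2_general hαβ (fun _ ↦ lipschitzWith_phi α) S hmin
end

section
/- Let 𝒜 : ℝ^{n₁×n₂} → ℝ^{n₃} be a linear map satisfying the rank restricted isometry property of order 2r with constant δ_{2r} ≤ 0.4663, let α > 0 and 0 < β ≤ 1/(20α). Then every matrix X ∈ ℝ^{n₁×n₂} of rank at most r is the unique minimizer of ‖Z‖_* + β·Φ̂_α(Z) subject to 𝒜Z = 𝒜X. -/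
open Finset Matrix

/-- The Frobenius norm of a matrix. -/
noncomputable def frob {n₁ n₂ : ℕ} (X : Matrix (Fin n₁) (Fin n₂) ℝ) : ℝ :=
  Real.sqrt (∑ i, ∑ j, (X i j) ^ 2)

/-- The rectangular `n₁ × n₂` matrix with `σ` on the diagonal and zeros elsewhere. -/
def diagRect {n₁ n₂ : ℕ} (σ : Fin (min n₁ n₂) → ℝ) : Matrix (Fin n₁) (Fin n₂) ℝ :=
  Matrix.of fun i j =>
    if h : (i : ℕ) = (j : ℕ) then σ ⟨i, lt_min i.isLt (lt_of_eq_of_lt h j.isLt)⟩ else 0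

/-- `σ` is the (nonincreasing) sequence of singular values of `X`:
`σ` is antitone, nonnegative, and `X = U (diag σ) Vᵀ` for orthogonal `U`, `V`. -/
def IsSVDVals {n₁ n₂ : ℕ} (X : Matrix (Fin n₁) (Fin n₂) ℝ)
    (σ : Fin (min n₁ n₂) → ℝ) : Prop :=
  Antitone σ ∧ (∀ i, 0 ≤ σ i) ∧
  ∃ (U : Matrix (Fin n₁) (Fin n₁) ℝ) (V : Matrix (Fin n₂) (Fin n₂) ℝ),
    Uᵀ * U = 1 ∧ Vᵀ * V = 1 ∧ X = U * diagRect σ * Vᵀ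

/-- `𝒜` satisfies the rank restricted isometry property of order `r`
with constant `δ ∈ [0,1)`. -/
def RankRIP {n₁ n₂ n₃ : ℕ} (𝒜 : Matrix (Fin n₁) (Fin n₂) ℝ →ₗ[ℝ] (Fin n₃ → ℝ))
    (r : ℕ) (δ : ℝ) : Prop :=
  0 ≤ δ ∧ δ < 1 ∧ ∀ X : Matrix (Fin n₁) (Fin n₂) ℝ, X.rank ≤ r →
    (1 - δ) * (frob X) ^ 2 ≤ (l2 (𝒜 X)) ^ 2 ∧
    (l2 (𝒜 X)) ^ 2 ≤ (1 + δ) * (frob X) ^ 2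

/-! Put `H = Z - X`, an element of the kernel of `𝒜`, with singular values `τ₁ ≥ τ₂ ≥ …`, and let
`a` be the sum of the first `r` of them. The penalty `Φ` sums a concave nondecreasing function `φ`
with `φ(t) ≤ φ(0) + L t` over the singular values; for `φ_α` one can take `L = α`.

* Nuclear norm. Composing at most `r` reflections gives an isometry `R` carrying the polar part of
  `H` to that of `X` on the singular vectors of `X`. Each reflection lowers the trace pairing with
  an orthonormal family by at most `2`, so `H` pairs with the rotated polar part to at least
  `‖H‖_* - 2a`, whence `‖Z‖_* ≥ ‖X‖_* + ‖H‖_* - 2a`.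
* Penalty. Supergradients of `φ` at the singular values of `Z` lie in `[0, L]`. Von Neumann's trace
  inequality, applied to the dual matrix whose singular values are `L` minus these slopes, gives
  `Φ(X) ≤ Φ(Z) + L (‖X‖_* - ‖Z‖_* + ‖H‖_*)`.
* Kernel. The rank isometry property turns into the sparse one along the singular vectors of `H`.
  Cutting `τ` into blocks of length `r` and comparing the first block with each later one yields
  `√(1 - δ²) a ≤ δ (‖H‖_* - a / 2)`.

Hence the objective grows by at least `‖H‖_* - 2 (1 + β L) a`, and this is positive as soon as
`(3 / 2 + 2 β L) δ < √(1 - δ²)`. -/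

section WeightedSums

variable {m : ℕ}

theorem sum_mul_nonneg_of_antitone {e s : Fin m → ℝ} (he : Antitone e) (he0 : ∀ i, 0 ≤ e i)
    (hs : ∀ k, 0 ≤ ∑ i ∈ Iic k, s i) : 0 ≤ ∑ i, e i * s i := by
  induction m with
  | zero => simp
  | succ m ih =>
    -- Abel summation: subtract the smallest weight `e (Fin.last m)` from all the others.
    have hpeel : ∑ i, e i * s i =
        ∑ i : Fin m, (e i.castSucc - e (Fin.last m)) * s i.castSucc +
          e (Fin.last m) * ∑ i ∈ Iic (Fin.last m), s i := by
      rw [← Fin.top_eq_last, Iic_top, Fin.top_eq_last, Fin.sum_univ_castSucc,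
        Fin.sum_univ_castSucc, mul_add, mul_sum, ← add_assoc, ← sum_add_distrib]
      simp only [← add_mul, sub_add_cancel]
    rw [hpeel]
    refine add_nonneg (ih ?_ ?_ ?_) (mul_nonneg (he0 _) (hs _))
    · exact fun i j hij => sub_le_sub_right (he (Fin.castSucc_le_castSucc_iff.2 hij)) _
    · exact fun i => sub_nonneg.2 (he (Fin.le_last _))
    · intro k
      simpa [← Fin.map_castSuccEmb_Iic] using hs k.castSucc

theorem sum_mul_le_mul_sum_filter_lt {a c : Fin m → ℝ} {C : ℝ} {k : ℕ} (ha : Antitone a)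
    (ha0 : ∀ i, 0 ≤ a i) (hc0 : ∀ i, 0 ≤ c i) (hcC : ∀ i, c i ≤ C) (hc : ∑ i, c i ≤ C * k) :
    ∑ i, a i * c i ≤ C * ∑ i with i.val < k, a i := by
  -- A threshold `p` separating the first `k` values of `a` from the rest makes the bound termwise.
  obtain ⟨p, hp0, hlow, hhigh⟩ : ∃ p, 0 ≤ p ∧ (∀ i : Fin m, i.val < k → p ≤ a i) ∧
      ∀ i : Fin m, k ≤ i.val → a i ≤ p := by
    rcases lt_or_ge k m with hk | hk
    · exact ⟨a ⟨k, hk⟩, ha0 _, fun i hi => ha hi.le, fun i hi => ha hi⟩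
    · exact ⟨0, le_rfl, fun i _ => ha0 i, fun i hi => absurd i.isLt (by lia)⟩
  have hcard : ∑ i, c i ≤ ∑ i : Fin m, if i.val < k then C else 0 := by
    rw [← sum_filter, sum_const, Fin.card_filter_val_lt, nsmul_eq_mul, mul_comm]
    rcases le_total k m with hk | hk
    · simpa [hk] using hc
    · simpa [hk, mul_comm] using sum_le_sum fun i (_ : i ∈ univ) => hcC i
  have hterm : ∀ i, (a i - p) * c i ≤ (a i - p) * if i.val < k then C else 0 := by
    intro i
    split_ifs with hi
    · exact mul_le_mul_of_nonneg_left (hcC i) (sub_nonneg.2 (hlow i hi))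
    · simpa using mul_nonpos_of_nonpos_of_nonneg (sub_nonpos.2 (hhigh i (not_lt.1 hi))) (hc0 i)
  calc ∑ i, a i * c i = ∑ i, (a i - p) * c i + p * ∑ i, c i := by
        simp only [sub_mul, sum_sub_distrib, mul_sum, sub_add_cancel]
    _ ≤ ∑ i, (a i - p) * (if i.val < k then C else 0) +
          p * ∑ i : Fin m, (if i.val < k then C else 0) :=
        add_le_add (sum_le_sum fun i _ => hterm i) (mul_le_mul_of_nonneg_left hcard hp0)
    _ = C * ∑ i with i.val < k, a i := by
        simp only [sub_mul, sum_sub_distrib, mul_sum, sub_add_cancel, sum_filter]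
        refine sum_congr rfl fun i _ => ?_
        split_ifs <;> ring

theorem sum_mul_substochastic_le {a e : Fin m → ℝ} {D : Fin m → Fin m → ℝ} (ha : Antitone a)
    (ha0 : ∀ i, 0 ≤ a i) (he : Antitone e) (he0 : ∀ i, 0 ≤ e i) (hD : ∀ i j, 0 ≤ D i j)
    (hrow : ∀ i, ∑ j, D i j ≤ 1) (hcol : ∀ j, ∑ i, D i j ≤ 1) :
    ∑ j, e j * ∑ i, a i * D i j ≤ ∑ j, e j * a j := by
  rw [← sub_nonneg, ← sum_sub_distrib]
  simp only [← mul_sub]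
  refine sum_mul_nonneg_of_antitone he he0 fun k => ?_
  have hsum : ∑ i, ∑ j ∈ Iic k, D i j ≤ 1 * (k.val + 1 : ℕ) := by
    rw [sum_comm, one_mul, ← Fin.card_Iic, ← nsmul_one]
    exact sum_le_card_nsmul (Iic k) _ 1 fun j _ => hcol j
  have htop := sum_mul_le_mul_sum_filter_lt ha ha0 (fun i => sum_nonneg fun j _ => hD i j)
    (fun i => (sum_le_univ_sum_of_nonneg (hD i)).trans (hrow i)) hsum
  have hIic : ({i : Fin m | i.val < k.val + 1} : Finset (Fin m)) = Iic k := by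
    ext i; simp [Order.lt_add_one_iff]
  rw [sum_sub_distrib, sub_nonneg, sum_comm]
  simpa only [one_mul, mul_sum, hIic] using htop

end WeightedSums

section OrthonormalFamilies

variable {E κ : Type*} [NormedAddCommGroup E] [InnerProductSpace ℝ E] [Fintype κ]

theorem sum_sq_inner_right_le {a : κ → E} (ha : Orthonormal ℝ a) (x : E) :
    ∑ k, inner ℝ (a k) x ^ 2 ≤ ‖x‖ ^ 2 := by
  simpa only [Real.norm_eq_abs, sq_abs] using ha.sum_inner_products_le x (s := univ)

theorem sum_inner_sub_reflection_le {a b : κ → E} (ha : Orthonormal ℝ a) (hb : Orthonormal ℝ b)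
    (w : E) : ∑ k, inner ℝ (a k) (b k - (ℝ ∙ w)ᗮ.reflection (b k)) ≤ 2 := by
  have hterm : ∀ k, inner ℝ (a k) (b k - (ℝ ∙ w)ᗮ.reflection (b k)) ≤
      (inner ℝ (a k) w ^ 2 + inner ℝ (b k) w ^ 2) / ‖w‖ ^ 2 := by
    intro k
    have hinner : inner ℝ (a k) (b k - (ℝ ∙ w)ᗮ.reflection (b k)) =
        2 * inner ℝ (a k) w * inner ℝ (b k) w / ‖w‖ ^ 2 := by
      rw [Submodule.reflection_orthogonal_apply, Submodule.reflection_singleton_apply,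
        sub_neg_eq_add, add_sub_cancel, inner_smul_right_eq_smul, inner_smul_right,
        real_inner_comm (b k) w, RCLike.ofReal_real_eq_id, id, nsmul_eq_mul]
      push_cast
      ring
    rw [hinner]
    gcongr
    exact two_mul_le_add_sq _ _
  calc _ ≤ ∑ k, (inner ℝ (a k) w ^ 2 + inner ℝ (b k) w ^ 2) / ‖w‖ ^ 2 :=
        sum_le_sum fun k _ => hterm k
    _ ≤ (‖w‖ ^ 2 + ‖w‖ ^ 2) / ‖w‖ ^ 2 := by
        rw [← sum_div, sum_add_distrib]
        gcongr <;> exact sum_sq_inner_right_le ‹_› w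
    _ ≤ 2 := by
        rw [← two_mul, mul_div_assoc]
        linarith [div_self_le_one (‖w‖ ^ 2)]

theorem exists_linearIsometryEquiv_eqOn_sum_inner_sub_le {ι : Type*} {p q : ι → E}
    (hp : Orthonormal ℝ p) (hq : Orthonormal ℝ q) (s : Finset ι) :
    ∃ R : E ≃ₗᵢ[ℝ] E, (∀ i ∈ s, R (p i) = q i) ∧
      ∀ a : κ → E, Orthonormal ℝ a → ∑ k, inner ℝ (a k) (a k - R (a k)) ≤ 2 * #s := by
  classical
  induction s using Finset.induction_on with
  | empty => exact ⟨LinearIsometryEquiv.refl ℝ E, by simp⟩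
  | insert j s hj ih =>
    obtain ⟨R, hRs, hR⟩ := ih
    -- Reflecting in the hyperplane orthogonal to `w` sends `R (p j)` to `q j` and fixes each `q i`.
    set w := R (p j) - q j with hw
    have hfix : ∀ i ∈ s, (ℝ ∙ w)ᗮ.reflection (q i) = q i := by
      intro i hi
      have hij : i ≠ j := ne_of_mem_of_not_mem hi hj
      refine Submodule.reflection_mem_subspace_eq_self
        (Submodule.mem_orthogonal_singleton_iff_inner_right.2 ?_)
      rw [hw, inner_sub_left, hq.2 hij.symm, ← hRs i hi, R.inner_map_map, hp.2 hij.symm, sub_zero]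
    refine ⟨R.trans (ℝ ∙ w)ᗮ.reflection, fun i hi => ?_, fun a ha => ?_⟩
    · rcases mem_insert.1 hi with rfl | hi
      · exact Submodule.reflection_sub (by rw [R.norm_map, hp.1, hq.1])
      · rw [LinearIsometryEquiv.trans_apply, hRs i hi, hfix i hi]
    · have hstep := sum_inner_sub_reflection_le ha (ha.comp_linearIsometryEquiv R) w
      calc _ = ∑ k, inner ℝ (a k) (a k - R (a k)) +
            ∑ k, inner ℝ (a k) (R (a k) - (ℝ ∙ w)ᗮ.reflection (R (a k))) := by
            simp only [← sum_add_distrib, ← inner_add_right, sub_add_sub_cancel,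
              LinearIsometryEquiv.trans_apply]
        _ ≤ 2 * #s + 2 := add_le_add (hR a ha) hstep
        _ = 2 * #(insert j s) := by rw [card_insert_of_notMem hj]; push_cast; ring

end OrthonormalFamilies

section RankOneSums

variable {ι m n : Type*} [Fintype ι]

/-- The matrix `∑ i, c i • u i (v i)ᵀ`, as a linear map in the coefficients `c`, so
that sparse coefficient vectors correspond to matrices of low rank. -/
noncomputable def rankOneSum (u : ι → EuclideanSpace ℝ m) (v : ι → EuclideanSpace ℝ n) :
    (ι → ℝ) →ₗ[ℝ] Matrix m n ℝ :=
  Fintype.linearCombination ℝ fun i => vecMulVec (u i).ofLp (v i).ofLp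

theorem rankOneSum_apply (u : ι → EuclideanSpace ℝ m) (v : ι → EuclideanSpace ℝ n) (c : ι → ℝ) :
    rankOneSum u v c = ∑ i, c i • vecMulVec (u i).ofLp (v i).ofLp :=
  rfl

theorem transpose_rankOneSum (u : ι → EuclideanSpace ℝ m) (v : ι → EuclideanSpace ℝ n)
    (c : ι → ℝ) : (rankOneSum u v c)ᵀ = rankOneSum v u c := by
  simp only [rankOneSum_apply, transpose_sum, transpose_smul, transpose_vecMulVec]

theorem rank_rankOneSum_le [Fintype n] (u : ι → EuclideanSpace ℝ m) (v : ι → EuclideanSpace ℝ n)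
    (c : ι → ℝ) : (rankOneSum u v c).rank ≤ #{i | c i ≠ 0} := by
  classical
  have hfactor : rankOneSum u v c =
      (of fun i => (u i).ofLp)ᵀ * diagonal c * of fun i => (v i).ofLp := by
    ext a b
    simp [rankOneSum_apply, Matrix.sum_apply, mul_apply, vecMulVec_apply, diagonal_apply,
      mul_assoc, mul_left_comm]
  rw [hfactor]
  refine (rank_mul_le_left _ _).trans ((rank_mul_le_right _ _).trans ?_)
  rw [rank_diagonal, Fintype.card_subtype]

theorem trace_transpose_rankOneSum_mul [Fintype m] [Fintype n] [DecidableEq n]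
    (u : ι → EuclideanSpace ℝ m) (v : ι → EuclideanSpace ℝ n) (c : ι → ℝ) (W : Matrix m n ℝ) :
    ((rankOneSum u v c)ᵀ * W).trace = ∑ i, c i * inner ℝ (u i) (W.toEuclideanLin (v i)) := by
  rw [transpose_rankOneSum, rankOneSum_apply, Matrix.sum_mul, trace_sum]
  refine sum_congr rfl fun i _ => ?_
  rw [Matrix.smul_mul, trace_smul, smul_eq_mul, vecMulVec_mul, trace_vecMulVec,
    EuclideanSpace.inner_eq_star_dotProduct, star_trivial, ofLp_toLpLin, dotProduct_comm,
    ← dotProduct_mulVec, dotProduct_comm, toLin'_apply]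

variable [Fintype n]

theorem toEuclideanLin_rankOneSum_apply [DecidableEq n] (u : ι → EuclideanSpace ℝ m)
    (v : ι → EuclideanSpace ℝ n) (c : ι → ℝ) (x : EuclideanSpace ℝ n) :
    (rankOneSum u v c).toEuclideanLin x = ∑ i, (c i * inner ℝ (v i) x) • u i := by
  ext a
  simp [rankOneSum_apply, toLpLin_apply, vecMulVec_mulVec, EuclideanSpace.inner_eq_star_dotProduct,
    dotProduct_comm, mul_assoc]

theorem toEuclideanLin_rankOneSum_apply_self [DecidableEq n] (u : ι → EuclideanSpace ℝ m)
    {v : ι → EuclideanSpace ℝ n} (hv : Orthonormal ℝ v) (c : ι → ℝ) (i : ι) :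
    (rankOneSum u v c).toEuclideanLin (v i) = c i • u i := by
  classical
  simp [toEuclideanLin_rankOneSum_apply, orthonormal_iff_ite.1 hv]

theorem trace_transpose_rankOneSum_mul_rankOneSum [Fintype m] {u : ι → EuclideanSpace ℝ m}
    {v : ι → EuclideanSpace ℝ n} (hu : Orthonormal ℝ u) (hv : Orthonormal ℝ v) (c d : ι → ℝ) :
    ((rankOneSum u v c)ᵀ * rankOneSum u v d).trace = ∑ i, c i * d i := by
  classical
  simp only [trace_transpose_rankOneSum_mul, toEuclideanLin_rankOneSum_apply_self u hv,
    inner_smul_right, real_inner_self_eq_norm_sq, hu.1, one_pow, mul_one]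

end RankOneSums

theorem sq_frob {n₁ n₂ : ℕ} (X : Matrix (Fin n₁) (Fin n₂) ℝ) :
    frob X ^ 2 = (Xᵀ * X).trace := by
  rw [frob, Real.sq_sqrt (by positivity), sum_comm]
  simp only [trace, diag_apply, mul_apply, transpose_apply, sq]

theorem sq_frob_rankOneSum {ι : Type*} [Fintype ι] {n₁ n₂ : ℕ}
    {u : ι → EuclideanSpace ℝ (Fin n₁)} {v : ι → EuclideanSpace ℝ (Fin n₂)}
    (hu : Orthonormal ℝ u) (hv : Orthonormal ℝ v) (c : ι → ℝ) :
    frob (rankOneSum u v c) ^ 2 = ∑ i, c i ^ 2 := by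
  simp only [sq_frob, trace_transpose_rankOneSum_mul_rankOneSum hu hv, ← sq]

section ThinSVD

variable {k : ℕ} {m n : Type*}

/-- A thin singular value decomposition `X = ∑ i, σ i • u i (v i)ᵀ` with `k` terms: both families
of singular vectors are orthonormal and the singular values are nonincreasing and nonnegative
(some of them may vanish). -/
structure IsThinSVD [Fintype m] [Fintype n] (X : Matrix m n ℝ) (u : Fin k → EuclideanSpace ℝ m)
    (σ : Fin k → ℝ) (v : Fin k → EuclideanSpace ℝ n) : Prop where
  orthonormal_left : Orthonormal ℝ u
  orthonormal_right : Orthonormal ℝ v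
  antitone : Antitone σ
  nonneg : ∀ i, 0 ≤ σ i
  eq_rankOneSum : X = rankOneSum u v σ

variable [Fintype m] [Fintype n] {X : Matrix m n ℝ} {u : Fin k → EuclideanSpace ℝ m}
  {σ : Fin k → ℝ} {v : Fin k → EuclideanSpace ℝ n}

theorem IsThinSVD.transpose (h : IsThinSVD X u σ v) : IsThinSVD Xᵀ v σ u where
  orthonormal_left := h.orthonormal_right
  orthonormal_right := h.orthonormal_left
  antitone := h.antitone
  nonneg := h.nonneg
  eq_rankOneSum := by rw [h.eq_rankOneSum, transpose_rankOneSum]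

theorem IsThinSVD.toEuclideanLin_apply [DecidableEq n] (h : IsThinSVD X u σ v) (i : Fin k) :
    X.toEuclideanLin (v i) = σ i • u i := by
  rw [h.eq_rankOneSum, toEuclideanLin_rankOneSum_apply_self u h.orthonormal_right]

theorem IsThinSVD.eq_zero_of_rank_le {r : ℕ} (h : IsThinSVD X u σ v) (hr : X.rank ≤ r)
    {i : Fin k} (hi : r ≤ i) : σ i = 0 := by
  classical
  by_contra hne
  have hpos : ∀ j : Iic i, σ j ≠ 0 := fun j =>
    ((h.nonneg i).lt_of_ne' hne |>.trans_le (h.antitone (mem_Iic.1 j.2))).ne'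
  have hmem : ∀ j : Iic i, u j ∈ X.toEuclideanLin.range := fun j =>
    ⟨(σ j)⁻¹ • v j, by rw [map_smul, h.toEuclideanLin_apply, inv_smul_smul₀ (hpos j)]⟩
  have hindep : LinearIndependent ℝ fun j : Iic i => (⟨u j, hmem j⟩ : X.toEuclideanLin.range) :=
    LinearIndependent.of_comp (Submodule.subtype _)
      (h.orthonormal_left.linearIndependent.comp _ Subtype.val_injective)
  have hrank : X.rank = Module.finrank ℝ X.toEuclideanLin.range := by
    rw [rank_eq_finrank_range_toLin X (PiLp.basisFun 2 ℝ m) (PiLp.basisFun 2 ℝ n),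
      toEuclideanLin, toLpLin_eq_toLin]
  have hcard := hindep.fintype_card_le_finrank
  rw [← hrank, Fintype.card_coe, Fin.card_Iic] at hcard
  lia

theorem exists_orthonormal_smul_eq {E : Type*} [NormedAddCommGroup E] [InnerProductSpace ℝ E]
    [FiniteDimensional ℝ E] (hk : k ≤ Module.finrank ℝ E) {w : Fin k → E} {σ : Fin k → ℝ}
    (hw : ∀ i j, inner ℝ (w i) (w j) = if i = j then σ i ^ 2 else 0) :
    ∃ u : Fin k → E, Orthonormal ℝ u ∧ ∀ i, w i = σ i • u i := by
  have hnorm : ∀ i, ‖w i‖ = |σ i| := fun i => by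
    rw [← abs_norm, ← sq_eq_sq_iff_abs_eq_abs, ← real_inner_self_eq_norm_sq, hw, if_pos rfl]
  let e : Fin k → Fin (Module.finrank ℝ E) := Fin.castLE hk
  have he : Function.Injective e := Fin.castLE_injective hk
  let u₀ : Fin (Module.finrank ℝ E) → E := Function.extend e (fun i => (σ i)⁻¹ • w i) 0
  have hu₀ : ∀ i, u₀ (e i) = (σ i)⁻¹ • w i := fun i => he.extend_apply _ _ i
  have hortho : Orthonormal ℝ ((e '' {i | σ i ≠ 0}).domRestrict u₀) := by
    constructor
    · rintro ⟨_, i, hi, rfl⟩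
      rw [Set.domRestrict_apply, hu₀, norm_smul, hnorm, norm_inv, Real.norm_eq_abs,
        inv_mul_cancel₀ (abs_ne_zero.2 hi)]
    · rintro ⟨_, i, hi, rfl⟩ ⟨_, j, hj, rfl⟩ hne
      have hij : i ≠ j := fun h => hne (Subtype.ext (congrArg e h))
      simp only [Set.domRestrict_apply, hu₀, inner_smul_left, inner_smul_right, hw, if_neg hij,
        mul_zero]
  obtain ⟨b, hb⟩ := hortho.exists_orthonormalBasis_extension_of_card_eq (Fintype.card_fin _).symm
  refine ⟨b ∘ e, b.orthonormal.comp e he, fun i => ?_⟩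
  by_cases hi : σ i = 0
  · rw [hi, zero_smul, ← norm_eq_zero, hnorm, hi, abs_zero]
  · rw [Function.comp_apply, hb _ ⟨i, hi, rfl⟩, hu₀, smul_inv_smul₀ hi]

theorem exists_isThinSVD_of_card_le (X : Matrix m n ℝ) (hn : Fintype.card n = k)
    (hm : k ≤ Fintype.card m) :
    ∃ (u : Fin k → EuclideanSpace ℝ m) (σ : Fin k → ℝ) (v : Fin k → EuclideanSpace ℝ n),
      IsThinSVD X u σ v := by
  classical
  have hfin : Module.finrank ℝ (EuclideanSpace ℝ n) = k := by rw [finrank_euclideanSpace, hn]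
  let T := X.toEuclideanLin
  let v := T.isSymmetric_adjoint_comp_self.eigenvectorBasis hfin
  let σ : Fin k → ℝ := fun i => T.singularValues i
  have hinner : ∀ i j, inner ℝ (T (v i)) (T (v j)) = if i = j then σ i ^ 2 else 0 := by
    intro i j
    rw [← T.adjoint_inner_left, ← LinearMap.comp_apply,
      T.isSymmetric_adjoint_comp_self.apply_eigenvectorBasis hfin, inner_smul_left,
      orthonormal_iff_ite.1 v.orthonormal]
    simp [σ, T.sq_singularValues_fin hfin]
  obtain ⟨u, hu, hTv⟩ := exists_orthonormal_smul_eq (by rwa [finrank_euclideanSpace]) hinner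
  refine ⟨u, σ, v, hu, v.orthonormal, fun i j hij => T.singularValues_antitone hij,
    fun i => T.singularValues_nonneg i, ?_⟩
  refine (toEuclideanLin (𝕜 := ℝ)).injective (v.toBasis.ext fun i => ?_)
  rw [v.coe_toBasis, toEuclideanLin_rankOneSum_apply_self u v.orthonormal]
  exact hTv i

end ThinSVD

theorem exists_isThinSVD {n₁ n₂ : ℕ} (X : Matrix (Fin n₁) (Fin n₂) ℝ) :
    ∃ (u : Fin (min n₁ n₂) → EuclideanSpace ℝ (Fin n₁)) (σ : Fin (min n₁ n₂) → ℝ)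
      (v : Fin (min n₁ n₂) → EuclideanSpace ℝ (Fin n₂)), IsThinSVD X u σ v := by
  rcases le_total n₂ n₁ with h | h
  · exact exists_isThinSVD_of_card_le X (by simp [h]) (by simp)
  · obtain ⟨v, σ, u, hX⟩ := exists_isThinSVD_of_card_le (k := min n₁ n₂) Xᵀ (by simp [h]) (by simp)
    exact ⟨u, σ, v, hX.transpose⟩

theorem diagRect_eq_rankOneSum {n₁ n₂ : ℕ} (σ : Fin (min n₁ n₂) → ℝ) :
    diagRect σ = rankOneSum (fun i => EuclideanSpace.single (i.castLE (min_le_left n₁ n₂)) 1)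
      (fun i => EuclideanSpace.single (i.castLE (min_le_right n₁ n₂)) 1) σ := by
  ext a b
  have hentry : ∀ i : Fin (min n₁ n₂), (σ i • vecMulVec
      (EuclideanSpace.single (i.castLE (min_le_left n₁ n₂)) (1 : ℝ)).ofLp
      (EuclideanSpace.single (i.castLE (min_le_right n₁ n₂)) (1 : ℝ)).ofLp) a b =
      if (i : ℕ) = a ∧ (i : ℕ) = b then σ i else 0 := by
    intro i
    simp [vecMulVec_apply, Pi.single_apply, Fin.ext_iff, ← ite_and, eq_comm, and_comm]
  rw [diagRect, of_apply, rankOneSum_apply, Matrix.sum_apply, sum_congr rfl fun i _ => hentry i]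
  split_ifs with hab
  · rw [Fintype.sum_eq_single ⟨a, lt_min a.isLt (hab ▸ b.isLt)⟩ fun i hi =>
      if_neg fun h => hi (Fin.ext h.1), if_pos ⟨rfl, hab⟩]
  · exact (sum_eq_zero fun i _ => if_neg fun h => hab (h.1.symm.trans h.2)).symm

theorem mul_rankOneSum_mul {ι l m n o : Type*} [Fintype ι] [Fintype m] [Fintype n] [DecidableEq m]
    [DecidableEq n] (U : Matrix l m ℝ) (V : Matrix o n ℝ) (u : ι → EuclideanSpace ℝ m)
    (v : ι → EuclideanSpace ℝ n) (c : ι → ℝ) :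
    U * rankOneSum u v c * Vᵀ =
      rankOneSum (fun i => U.toEuclideanLin (u i)) (fun i => V.toEuclideanLin (v i)) c := by
  simp only [rankOneSum_apply, Matrix.mul_sum, Matrix.sum_mul, Matrix.mul_smul, Matrix.smul_mul,
    mul_vecMulVec, vecMulVec_mul, vecMul_transpose, ofLp_toLpLin, toLin'_apply]

theorem orthonormal_toEuclideanLin_comp {ι m n : Type*} [Fintype m] [Fintype n] [DecidableEq n]
    {U : Matrix m n ℝ} (hU : Uᵀ * U = 1) {u : ι → EuclideanSpace ℝ n} (hu : Orthonormal ℝ u) :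
    Orthonormal ℝ fun i => U.toEuclideanLin (u i) := by
  have hinner : ∀ x y, inner ℝ (U.toEuclideanLin x) (U.toEuclideanLin y) = inner ℝ x y := by
    intro x y
    simp only [EuclideanSpace.inner_eq_star_dotProduct, star_trivial, ofLp_toLpLin, toLin'_apply]
    rw [dotProduct_mulVec, ← mulVec_transpose, mulVec_mulVec, hU, one_mulVec]
  exact hu.comp_linearIsometry (U.toEuclideanLin.isometryOfInner hinner)

theorem IsSVDVals.exists_isThinSVD {n₁ n₂ : ℕ} {X : Matrix (Fin n₁) (Fin n₂) ℝ}
    {σ : Fin (min n₁ n₂) → ℝ} (h : IsSVDVals X σ) : ∃ u v, IsThinSVD X u σ v := by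
  obtain ⟨hanti, hnonneg, U, V, hU, hV, hX⟩ := h
  rw [diagRect_eq_rankOneSum, mul_rankOneSum_mul] at hX
  exact ⟨_, _, orthonormal_toEuclideanLin_comp hU
    (EuclideanSpace.orthonormal_single.comp _ (Fin.castLE_injective _)),
    orthonormal_toEuclideanLin_comp hV
    (EuclideanSpace.orthonormal_single.comp _ (Fin.castLE_injective _)), hanti, hnonneg, hX⟩

section TraceInequalities

variable {k : ℕ} {m n : Type*} [Fintype m] [Fintype n]

theorem IsThinSVD.trace_transpose_mul_le {X Y : Matrix m n ℝ} {u u' : Fin k → EuclideanSpace ℝ m}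
    {σ τ : Fin k → ℝ} {v v' : Fin k → EuclideanSpace ℝ n} (hX : IsThinSVD X u σ v)
    (hY : IsThinSVD Y u' τ v') : (Xᵀ * Y).trace ≤ ∑ j, τ j * σ j := by
  classical
  let D : Fin k → Fin k → ℝ := fun i j => (inner ℝ (u i) (u' j) ^ 2 + inner ℝ (v i) (v' j) ^ 2) / 2
  have hrow : ∀ i, ∑ j, D i j ≤ 1 := fun i => by
    have hu := sum_sq_inner_right_le hY.orthonormal_left (u i)
    have hv := sum_sq_inner_right_le hY.orthonormal_right (v i)
    simp only [real_inner_comm (u i), real_inner_comm (v i), hX.orthonormal_left.1,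
      hX.orthonormal_right.1] at hu hv
    rw [← sum_div, sum_add_distrib]
    linarith
  have hcol : ∀ j, ∑ i, D i j ≤ 1 := fun j => by
    have hu := sum_sq_inner_right_le hX.orthonormal_left (u' j)
    have hv := sum_sq_inner_right_le hX.orthonormal_right (v' j)
    rw [hY.orthonormal_left.1] at hu
    rw [hY.orthonormal_right.1] at hv
    rw [← sum_div, sum_add_distrib]
    linarith
  have hterm : ∀ i j, inner ℝ (v' j) (v i) * inner ℝ (u i) (u' j) ≤ D i j := fun i j => by
    have hamgm := two_mul_le_add_sq (inner ℝ (u i) (u' j)) (inner ℝ (v i) (v' j))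
    simp only [D, real_inner_comm (v i) (v' j)]
    linarith
  calc (Xᵀ * Y).trace
      = ∑ j, τ j * ∑ i, σ i * (inner ℝ (v' j) (v i) * inner ℝ (u i) (u' j)) := by
        rw [hX.eq_rankOneSum, trace_transpose_rankOneSum_mul, hY.eq_rankOneSum]
        simp only [toEuclideanLin_rankOneSum_apply, inner_sum, inner_smul_right, mul_sum]
        rw [sum_comm]
        exact sum_congr rfl fun j _ => sum_congr rfl fun i _ => by ring
    _ ≤ ∑ j, τ j * ∑ i, σ i * D i j := by
        gcongr with j _ i _
        exacts [hY.nonneg j, hX.nonneg i, hterm i j]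
    _ ≤ ∑ j, τ j * σ j := sum_mul_substochastic_le hX.antitone hX.nonneg hY.antitone hY.nonneg
        (fun i j => by positivity) hrow hcol

theorem exists_linearIsometry_apply_eq {E F : Type*} [NormedAddCommGroup E] [InnerProductSpace ℝ E]
    [NormedAddCommGroup F] [InnerProductSpace ℝ F] [FiniteDimensional ℝ E]
    (hk : Module.finrank ℝ E = k) {v : Fin k → E} {u : Fin k → F} (hv : Orthonormal ℝ v)
    (hu : Orthonormal ℝ u) : ∃ O : E →ₗᵢ[ℝ] F, ∀ i, O (v i) = u i := by
  have hv' : Orthonormal ℝ (Set.univ.domRestrict v) := hv.comp _ Subtype.val_injective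
  obtain ⟨b, hb⟩ := hv'.exists_orthonormalBasis_extension_of_card_eq (by rw [Fintype.card_fin, hk])
  have hcomp : b.toBasis.constr ℝ u ∘ b.toBasis = u :=
    funext fun i => b.toBasis.constr_basis ℝ u i
  have hb_toBasis : Orthonormal ℝ b.toBasis := by rw [b.coe_toBasis]; exact b.orthonormal
  refine ⟨(b.toBasis.constr ℝ u).isometryOfOrthonormal hb_toBasis (by rwa [hcomp]), fun i => ?_⟩
  rw [← hb i (Set.mem_univ i), ← b.coe_toBasis]
  exact congrFun hcomp i

theorem IsThinSVD.trace_transpose_mul_le_of_isometry [DecidableEq n] {X : Matrix m n ℝ}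
    {u : Fin k → EuclideanSpace ℝ m} {σ : Fin k → ℝ} {v : Fin k → EuclideanSpace ℝ n}
    (hX : IsThinSVD X u σ v) (W : EuclideanSpace ℝ n →ₗᵢ[ℝ] EuclideanSpace ℝ m) :
    (Xᵀ * toEuclideanLin.symm W.toLinearMap).trace ≤ ∑ i, σ i := by
  rw [hX.eq_rankOneSum, trace_transpose_rankOneSum_mul, LinearEquiv.apply_symm_apply]
  refine sum_le_sum fun i _ => mul_le_of_le_one_right (hX.nonneg i) ?_
  simpa [hX.orthonormal_left.1, hX.orthonormal_right.1] using real_inner_le_norm (u i) (W (v i))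

theorem sum_mul_inner_sub_le {E : Type*} [NormedAddCommGroup E] [InnerProductSpace ℝ E]
    {a : Fin k → E} {τ : Fin k → ℝ} {r : ℕ} (hτ : Antitone τ) (hτ0 : ∀ i, 0 ≤ τ i)
    (ha : Orthonormal ℝ a) (R : E ≃ₗᵢ[ℝ] E)
    (hR : ∑ i, inner ℝ (a i) (a i - R (a i)) ≤ 2 * r) :
    ∑ i, τ i * inner ℝ (a i) (a i - R (a i)) ≤ 2 * ∑ i with i.val < r, τ i := by
  have hbound : ∀ i, |inner ℝ (a i) (R (a i))| ≤ 1 := fun i => by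
    simpa [ha.1] using abs_real_inner_le_norm (a i) (R (a i))
  have hexpand : ∀ i, inner ℝ (a i) (a i - R (a i)) = 1 - inner ℝ (a i) (R (a i)) := fun i => by
    rw [inner_sub_right, real_inner_self_eq_norm_sq, ha.1, one_pow]
  refine sum_mul_le_mul_sum_filter_lt hτ hτ0 (fun i => ?_) (fun i => ?_) hR <;>
    linarith [hexpand i, abs_le.1 (hbound i)]

theorem IsThinSVD.sum_sub_le_trace_transpose_mul [DecidableEq n] {H : Matrix m n ℝ}
    {u : Fin k → EuclideanSpace ℝ m} {τ : Fin k → ℝ} {v : Fin k → EuclideanSpace ℝ n} {r : ℕ}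
    (hH : IsThinSVD H u τ v) {O : EuclideanSpace ℝ n →ₗᵢ[ℝ] EuclideanSpace ℝ m}
    (hO : ∀ i, O (v i) = u i) {R : EuclideanSpace ℝ m ≃ₗᵢ[ℝ] EuclideanSpace ℝ m}
    (hR : ∑ i, inner ℝ (u i) (u i - R (u i)) ≤ 2 * r) :
    ∑ i, τ i - 2 * ∑ i with i.val < r, τ i ≤
      (Hᵀ * toEuclideanLin.symm (R.toLinearIsometry.comp O).toLinearMap).trace := by
  have hpair : (Hᵀ * toEuclideanLin.symm (R.toLinearIsometry.comp O).toLinearMap).trace =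
      ∑ i, τ i - ∑ i, τ i * inner ℝ (u i) (u i - R (u i)) := by
    rw [hH.eq_rankOneSum, trace_transpose_rankOneSum_mul, LinearEquiv.apply_symm_apply,
      ← sum_sub_distrib]
    refine sum_congr rfl fun i _ => ?_
    have hWi : R.toLinearIsometry.comp O (v i) = R (u i) := congrArg R (hO i)
    simp only [LinearIsometry.coe_toLinearMap, hWi, inner_sub_right, real_inner_self_eq_norm_sq,
      hH.orthonormal_left.1]
    ring
  linarith [sum_mul_inner_sub_le hH.antitone hH.nonneg hH.orthonormal_left R hR]

theorem IsThinSVD.sum_add_sum_le_of_card_eq (hn : Fintype.card n = k) {X H : Matrix m n ℝ}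
    {r : ℕ} {u u' u'' : Fin k → EuclideanSpace ℝ m} {σ τ ζ : Fin k → ℝ}
    {v v' v'' : Fin k → EuclideanSpace ℝ n} (hX : IsThinSVD X u σ v) (hr : X.rank ≤ r)
    (hH : IsThinSVD H u' τ v') (hZ : IsThinSVD (X + H) u'' ζ v'') :
    ∑ i, σ i + ∑ i, τ i ≤ ∑ i, ζ i + 2 * ∑ i with i.val < r, τ i := by
  classical
  obtain ⟨O, hO⟩ := exists_linearIsometry_apply_eq (by rw [finrank_euclideanSpace, hn])
    hH.orthonormal_right hH.orthonormal_left
  obtain ⟨R, hRX, hR⟩ := exists_linearIsometryEquiv_eqOn_sum_inner_sub_le (κ := Fin k)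
    (hX.orthonormal_right.comp_linearIsometry O) hX.orthonormal_left ({i | i.val < r})
  -- `M` has operator norm at most one, pairs with `X` to its nuclear norm, and, `R` being close to
  -- the identity, pairs with `H` almost to the nuclear norm of `H`.
  let W := R.toLinearIsometry.comp O
  let M : Matrix m n ℝ := toEuclideanLin.symm W.toLinearMap
  have hXM : (Xᵀ * M).trace = ∑ i, σ i := by
    rw [hX.eq_rankOneSum, trace_transpose_rankOneSum_mul, LinearEquiv.apply_symm_apply]
    refine sum_congr rfl fun i _ => ?_
    rcases lt_or_ge i.val r with hi | hi
    · have hWi : W (v i) = u i := hRX i (by simpa using hi)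
      simp [hWi, hX.orthonormal_left.1]
    · rw [hX.eq_zero_of_rank_le hr hi, zero_mul]
  have hHM : ∑ i, τ i - 2 * ∑ i with i.val < r, τ i ≤ (Hᵀ * M).trace := by
    refine hH.sum_sub_le_trace_transpose_mul hO ((hR u' hH.orthonormal_left).trans ?_)
    gcongr
    rw [Fin.card_filter_val_lt]
    exact min_le_right k r
  have hZM := hZ.trace_transpose_mul_le_of_isometry W
  rw [transpose_add, Matrix.add_mul, trace_add] at hZM
  linarith

end TraceInequalities

theorem IsThinSVD.sum_add_sum_le {n₁ n₂ r : ℕ} {X H : Matrix (Fin n₁) (Fin n₂) ℝ}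
    {u u' u'' : Fin (min n₁ n₂) → EuclideanSpace ℝ (Fin n₁)} {σ τ ζ : Fin (min n₁ n₂) → ℝ}
    {v v' v'' : Fin (min n₁ n₂) → EuclideanSpace ℝ (Fin n₂)} (hX : IsThinSVD X u σ v)
    (hr : X.rank ≤ r) (hH : IsThinSVD H u' τ v') (hZ : IsThinSVD (X + H) u'' ζ v'') :
    ∑ i, σ i + ∑ i, τ i ≤ ∑ i, ζ i + 2 * ∑ i with i.val < r, τ i := by
  rcases le_total n₂ n₁ with h | h
  · exact hX.sum_add_sum_le_of_card_eq (by simp [h]) hr hH hZ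
  · exact hX.transpose.sum_add_sum_le_of_card_eq (by simp [h]) (by rwa [rank_transpose])
      hH.transpose (transpose_add X H ▸ hZ.transpose)

section ConcavePenalties

theorem exists_supergradient_of_concaveOn_of_monotoneOn {φ : ℝ → ℝ} {L z : ℝ}
    (hφ : ConcaveOn ℝ (Set.Ici 0) φ) (hmono : MonotoneOn φ (Set.Ici 0))
    (hL : ∀ t, 0 ≤ t → φ t ≤ φ 0 + L * t) (hz : 0 ≤ z) :
    ∃ d ∈ Set.Icc 0 L, ∀ x, 0 ≤ x → φ x ≤ φ z + d * (x - z) := by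
  rcases hz.eq_or_lt with rfl | hz
  · have hL0 : φ 0 ≤ φ 1 := hmono Set.self_mem_Ici (Set.mem_Ici.2 zero_le_one) zero_le_one
    exact ⟨L, ⟨by linarith [hL 1 zero_le_one], le_rfl⟩, by simpa using hL⟩
  obtain ⟨d, hright, hleft⟩ : (upperBounds (slope φ z '' Set.Ioi z) ∩
      lowerBounds (slope φ z '' Set.Ico 0 z)).Nonempty := by
    refine exists_between_of_forall_le (Set.nonempty_Ioi.image _)
      ((Set.nonempty_Ico.2 hz).image _) ?_
    rintro _ ⟨y, hy, rfl⟩ _ ⟨x, hx, rfl⟩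
    rw [slope_comm φ z x, slope_def_field, slope_def_field]
    exact hφ.slope_anti_adjacent hx.1 (hz.trans hy).le hx.2 hy
  have hsuper : ∀ x, 0 ≤ x → φ x ≤ φ z + d * (x - z) := by
    intro x hx
    rcases lt_trichotomy x z with hxz | rfl | hxz
    · have hslope := hleft ⟨x, ⟨hx, hxz⟩, rfl⟩
      rw [slope_def_field, le_div_iff_of_neg (sub_neg.2 hxz)] at hslope
      linarith
    · simp
    · have hslope := hright ⟨x, hxz, rfl⟩
      rw [slope_def_field, div_le_iff₀ (sub_pos.2 hxz)] at hslope
      linarith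
  refine ⟨d, ⟨?_, ?_⟩, hsuper⟩
  · have hstep : φ z ≤ φ (z + 1) := hmono hz.le (by positivity : 0 ≤ z + 1) (by linarith)
    linarith [hsuper (z + 1) (by positivity)]
  · exact le_of_mul_le_mul_right (by linarith [hsuper 0 le_rfl, hL z hz.le]) hz

theorem exists_antitoneOn_supergradient {φ : ℝ → ℝ} {L : ℝ}
    (hφ : ConcaveOn ℝ (Set.Ici 0) φ) (hmono : MonotoneOn φ (Set.Ici 0))
    (hL : ∀ t, 0 ≤ t → φ t ≤ φ 0 + L * t) :
    ∃ d : ℝ → ℝ, AntitoneOn d (Set.Ici 0) ∧ Set.MapsTo d (Set.Ici 0) (Set.Icc 0 L) ∧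
      ∀ z, 0 ≤ z → ∀ x, 0 ≤ x → φ x ≤ φ z + d z * (x - z) := by
  choose! d hdL hd using fun z (hz : 0 ≤ z) =>
    exists_supergradient_of_concaveOn_of_monotoneOn hφ hmono hL hz
  refine ⟨d, fun x hx z hz hxz => ?_, hdL, hd⟩
  rcases hxz.eq_or_lt with rfl | hxz
  · rfl
  · exact le_of_mul_le_mul_right (by linarith [hd x hx z hz, hd z hz x hx]) (sub_pos.2 hxz)

theorem IsThinSVD.sum_penalty_le {k : ℕ} {m n : Type*} [Fintype m] [Fintype n] {φ : ℝ → ℝ} {L : ℝ}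
    (hφ : ConcaveOn ℝ (Set.Ici 0) φ) (hmono : MonotoneOn φ (Set.Ici 0))
    (hL : ∀ t, 0 ≤ t → φ t ≤ φ 0 + L * t) {X H : Matrix m n ℝ}
    {u u' u'' : Fin k → EuclideanSpace ℝ m} {σ τ ζ : Fin k → ℝ}
    {v v' v'' : Fin k → EuclideanSpace ℝ n} (hX : IsThinSVD X u σ v) (hH : IsThinSVD H u' τ v')
    (hZ : IsThinSVD (X + H) u'' ζ v'') :
    ∑ i, φ (σ i) ≤ ∑ i, φ (ζ i) + L * (∑ i, σ i - ∑ i, ζ i + ∑ i, τ i) := by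
  classical
  obtain ⟨d, hanti, hdL, hd⟩ := exists_antitoneOn_supergradient hφ hmono hL
  -- The slopes `d (ζ i)` increase with `i`; their complements `e i` can serve as singular values.
  let e : Fin k → ℝ := fun i => L - d (ζ i)
  have hE : IsThinSVD (rankOneSum u'' v'' e) u'' e v'' :=
    ⟨hZ.orthonormal_left, hZ.orthonormal_right,
      fun i j hij => sub_le_sub_left (hanti (hZ.nonneg j) (hZ.nonneg i) (hZ.antitone hij)) L,
      fun i => sub_nonneg.2 (hdL (hZ.nonneg i)).2, rfl⟩
  have hdual : ∑ i, ζ i * e i ≤ ∑ i, e i * σ i + L * ∑ i, τ i :=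
    calc ∑ i, ζ i * e i = ((X + H)ᵀ * rankOneSum u'' v'' e).trace := by
          rw [hZ.eq_rankOneSum, trace_transpose_rankOneSum_mul_rankOneSum hZ.orthonormal_left
            hZ.orthonormal_right]
      _ = (Xᵀ * rankOneSum u'' v'' e).trace + (Hᵀ * rankOneSum u'' v'' e).trace := by
          rw [transpose_add, Matrix.add_mul, trace_add]
      _ ≤ ∑ i, e i * σ i + ∑ i, e i * τ i :=
          add_le_add (hX.trace_transpose_mul_le hE) (hH.trace_transpose_mul_le hE)
      _ ≤ ∑ i, e i * σ i + L * ∑ i, τ i := by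
          rw [mul_sum _ _ L]
          gcongr with i
          exacts [hH.nonneg i, sub_le_self L (hdL (hZ.nonneg i)).1]
  calc ∑ i, φ (σ i) ≤ ∑ i, (φ (ζ i) + d (ζ i) * (σ i - ζ i)) :=
        sum_le_sum fun i _ => hd _ (hZ.nonneg i) _ (hX.nonneg i)
    _ = ∑ i, φ (ζ i) + L * (∑ i, σ i - ∑ i, ζ i) + (∑ i, ζ i * e i - ∑ i, e i * σ i) := by
        simp only [mul_sum, mul_sub, ← sum_sub_distrib, ← sum_add_distrib, e]
        exact sum_congr rfl fun i _ => by ring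
    _ ≤ _ := by linarith

theorem phi_of_nonneg {α t : ℝ} (ht : 0 ≤ t) : phi α t = α * t / (1 + α * t) := by
  rw [phi, abs_of_nonneg ht]

theorem phi_le_add_mul_sub {α x z : ℝ} (hα : 0 ≤ α) (hx : 0 ≤ x) (hz : 0 ≤ z) :
    phi α x ≤ phi α z + α / (1 + α * z) ^ 2 * (x - z) := by
  have hgap : phi α z + α / (1 + α * z) ^ 2 * (x - z) - phi α x =
      α ^ 2 * (x - z) ^ 2 / ((1 + α * x) * (1 + α * z) ^ 2) := by
    have hx' : 1 + α * x ≠ 0 := by positivity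
    have hz' : 1 + α * z ≠ 0 := by positivity
    rw [phi_of_nonneg hx, phi_of_nonneg hz]
    field_simp
    ring
  rw [← sub_nonneg, hgap]
  positivity

theorem concaveOn_phi {α : ℝ} (hα : 0 ≤ α) : ConcaveOn ℝ (Set.Ici 0) (phi α) := by
  refine ⟨convex_Ici 0, fun x hx y hy a b ha hb hab => ?_⟩
  have hx := Set.mem_Ici.1 hx
  have hy := Set.mem_Ici.1 hy
  have hz : 0 ≤ a • x + b • y := by positivity
  have hxz := mul_le_mul_of_nonneg_left (phi_le_add_mul_sub hα hx hz) ha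
  have hyz := mul_le_mul_of_nonneg_left (phi_le_add_mul_sub hα hy hz) hb
  set z := a • x + b • y with hz_def
  set s := α / (1 + α * z) ^ 2
  calc a • phi α x + b • phi α y
      ≤ a * (phi α z + s * (x - z)) + b * (phi α z + s * (y - z)) := add_le_add hxz hyz
    _ = (a + b) * phi α z + s * ((a • x + b • y) - (a + b) * z) := by
        simp only [smul_eq_mul]; ring
    _ = phi α z := by rw [hab, ← hz_def]; ring

theorem monotoneOn_phi {α : ℝ} (hα : 0 ≤ α) : MonotoneOn (phi α) (Set.Ici 0) := by
  intro x hx y hy hxy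
  have hx := Set.mem_Ici.1 hx
  have hy := Set.mem_Ici.1 hy
  have hαxy : α * x ≤ α * y := by gcongr
  rw [phi_of_nonneg hx, phi_of_nonneg hy, div_le_div_iff₀ (by positivity) (by positivity)]
  linarith

theorem phi_le_phi_zero_add_mul {α t : ℝ} (hα : 0 ≤ α) (ht : 0 ≤ t) :
    phi α t ≤ phi α 0 + α * t := by
  simpa using phi_le_add_mul_sub hα ht le_rfl

end ConcavePenalties

section SparseRIP

variable {F : Type*} [NormedAddCommGroup F] [InnerProductSpace ℝ F]

theorem sqrt_mul_abs_inner_mul_norm_le {E : Type*} [NormedAddCommGroup E] [InnerProductSpace ℝ E]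
    {T : E →ₗ[ℝ] F} {δ : ℝ} {u v : E} (hδ0 : 0 ≤ δ) (hδ1 : δ ≤ 1) (huv : inner ℝ u v = 0)
    (hlower : ∀ t : ℝ, (1 - δ) * ‖t • u + v‖ ^ 2 ≤ ‖T (t • u + v)‖ ^ 2)
    (hupper : ∀ t : ℝ, ‖T (t • u + v)‖ ^ 2 ≤ (1 + δ) * ‖t • u + v‖ ^ 2) :
    √(1 - δ ^ 2) * |inner ℝ (T u) (T v)| * ‖u‖ ≤ δ * ‖T u‖ ^ 2 * ‖v‖ := by
  set C := inner ℝ (T u) (T v)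
  set w := (1 - δ ^ 2) * ‖u‖ ^ 2
  have hδ2 : 0 ≤ 1 - δ ^ 2 := by nlinarith
  have hnorm : ∀ t : ℝ, ‖t • u + v‖ ^ 2 = t ^ 2 * ‖u‖ ^ 2 + ‖v‖ ^ 2 := fun t => by
    rw [norm_add_sq_real, inner_smul_left, huv, norm_smul, mul_pow, Real.norm_eq_abs, sq_abs]
    simp
  have hnormT : ∀ t : ℝ, ‖T (t • u + v)‖ ^ 2 = t ^ 2 * ‖T u‖ ^ 2 + 2 * t * C + ‖T v‖ ^ 2 :=
    fun t => by
      rw [map_add, map_smul, norm_add_sq_real, inner_smul_left, norm_smul, mul_pow,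
        Real.norm_eq_abs, sq_abs, RCLike.conj_to_real]
      ring
  simp only [hnorm, hnormT] at hlower hupper
  have hquad : ∀ s : ℝ,
      0 ≤ δ * (2 * ‖T u‖ ^ 2 - w) * (s * s) + (-2 * C) * s + δ * ‖v‖ ^ 2 := fun s => by
    -- These two values of `t` eliminate `‖T v‖ ^ 2`.
    linarith [hupper ((1 - δ) * s), hlower (-(1 + δ) * s)]
  have hdiscrim := discrim_le_zero hquad
  rw [discrim] at hdiscrim
  have hsq : w * C ^ 2 ≤ (δ * ‖T u‖ ^ 2 * ‖v‖) ^ 2 := by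
    have hC2 : C ^ 2 ≤ δ ^ 2 * ((2 * ‖T u‖ ^ 2 - w) * ‖v‖ ^ 2) := by linarith
    calc w * C ^ 2 ≤ w * (δ ^ 2 * ((2 * ‖T u‖ ^ 2 - w) * ‖v‖ ^ 2)) := by gcongr
      _ = δ ^ 2 * ‖v‖ ^ 2 * ((2 * ‖T u‖ ^ 2 - w) * w) := by ring
      _ ≤ δ ^ 2 * ‖v‖ ^ 2 * (‖T u‖ ^ 2) ^ 2 := by
        gcongr
        linarith [sq_nonneg (‖T u‖ ^ 2 - w)]
      _ = (δ * ‖T u‖ ^ 2 * ‖v‖) ^ 2 := by ring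
  refine le_of_sq_le_sq ?_ (by positivity)
  rw [mul_pow, mul_pow, Real.sq_sqrt hδ2, sq_abs]
  linarith

variable {m : ℕ}

/-- The restricted isometry property of order `s` with constant `δ` for vectors: `T` distorts the
squared norm of every vector with at most `s` nonzero coordinates by a factor between `1 - δ` and
`1 + δ`. It is the form that `RankRIP` takes on matrices with prescribed singular vectors. -/
structure SparseRIP {ι : Type*} [Fintype ι] (T : EuclideanSpace ℝ ι →ₗ[ℝ] F) (s : ℕ) (δ : ℝ) :
    Prop where
  nonneg : 0 ≤ δ
  lt_one : δ < 1
  lower : ∀ x : EuclideanSpace ℝ ι, #{i | x i ≠ 0} ≤ s → (1 - δ) * ‖x‖ ^ 2 ≤ ‖T x‖ ^ 2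
  upper : ∀ x : EuclideanSpace ℝ ι, #{i | x i ≠ 0} ≤ s → ‖T x‖ ^ 2 ≤ (1 + δ) * ‖x‖ ^ 2

/-- The `k`-th block of length `r` of `x`: the coordinates `i` with `k * r ≤ i < (k + 1) * r` are
kept and all others are replaced by zero. Blocks cut the singular values of a matrix in the kernel
of the measurement map into pieces to which the isometry property applies. -/
noncomputable def block (r : ℕ) (x : EuclideanSpace ℝ (Fin m)) (k : ℕ) :
    EuclideanSpace ℝ (Fin m) :=
  WithLp.toLp 2 fun i => if i.val / r = k then x i else 0

theorem block_apply (r : ℕ) (x : EuclideanSpace ℝ (Fin m)) (k : ℕ) (i : Fin m) :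
    block r x k i = if i.val / r = k then x i else 0 :=
  rfl

theorem sum_range_block (r : ℕ) (x : EuclideanSpace ℝ (Fin m)) :
    ∑ k ∈ range (m + 1), block r x k = x := by
  ext i
  have hi : i.val / r < m + 1 := (Nat.div_le_self _ _).trans_lt (by lia)
  simp [block_apply, hi]

theorem inner_block_block_of_ne {r k l : ℕ} (x : EuclideanSpace ℝ (Fin m)) (hkl : k ≠ l) :
    inner ℝ (block r x k) (block r x l) = 0 := by
  rw [PiLp.inner_apply]
  refine sum_eq_zero fun i _ => ?_
  rw [block_apply, block_apply]
  split_ifs with hk hl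
  · exact absurd (hk.symm.trans hl) hkl
  all_goals simp

theorem norm_sq_block (r : ℕ) (x : EuclideanSpace ℝ (Fin m)) (k : ℕ) :
    ‖block r x k‖ ^ 2 = ∑ i with i.val / r = k, x i ^ 2 := by
  simp [EuclideanSpace.real_norm_sq_eq, block_apply, sum_filter]

theorem card_filter_div_eq_le {r : ℕ} (hr : 0 < r) (k : ℕ) :
    #{i : Fin m | i.val / r = k} ≤ r := by
  have hmaps : Set.MapsTo Fin.val (({i | i.val / r = k} : Finset (Fin m)) : Set (Fin m))
      (Ico (k * r) (k * r + r) : Finset ℕ) := by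
    intro i hi
    simpa [Nat.div_eq_iff hr, Nat.lt_iff_le_pred, hr, add_mul] using hi
  simpa using card_le_card_of_injOn _ hmaps Fin.val_injective.injOn

theorem le_card_filter_div_eq {r k : ℕ} (hr : 0 < r) {j : Fin m} (hj : k < j.val / r) :
    r ≤ #{i : Fin m | i.val / r = k} := by
  have hj : k * r + r ≤ j := by
    simpa [add_mul] using (Nat.le_div_iff_mul_le hr).1 (Nat.succ_le_of_lt hj)
  have hsurj : Set.SurjOn Fin.val (({i | i.val / r = k} : Finset (Fin m)) : Set (Fin m))
      (Ico (k * r) (k * r + r) : Finset ℕ) := by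
    intro i hi
    have hi := mem_Ico.1 (mem_coe.1 hi)
    refine ⟨⟨i, by lia⟩, ?_, rfl⟩
    simp [Nat.div_eq_iff hr]
    lia
  simpa using card_le_card_of_surjOn _ hsurj

theorem card_support_block_le {r : ℕ} (hr : 0 < r) (x : EuclideanSpace ℝ (Fin m)) (k : ℕ) :
    #{i | block r x k i ≠ 0} ≤ r :=
  (card_le_card (monotone_filter_right _ fun i _ hi => by
    by_contra h; exact hi (if_neg h))).trans (card_filter_div_eq_le hr k)

theorem card_support_smul_add_le {ι : Type*} [Fintype ι] (t : ℝ) (x y : EuclideanSpace ℝ ι) :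
    #{i | (t • x + y) i ≠ 0} ≤ #{i | x i ≠ 0} + #{i | y i ≠ 0} := by
  classical
  refine (card_le_card fun i hi => ?_).trans (card_union_le _ _)
  simp only [mem_union, mem_filter, mem_univ, true_and] at hi ⊢
  contrapose! hi
  simp [hi]

theorem sum_filter_div_eq_le_sqrt_mul_norm_block {r : ℕ} (hr : 0 < r)
    (x : EuclideanSpace ℝ (Fin m)) (k : ℕ) :
    ∑ i with i.val / r = k, x i ≤ √r * ‖block r x k‖ := by
  refine le_of_sq_le_sq ?_ (by positivity)
  rw [mul_pow, Real.sq_sqrt (by positivity), norm_sq_block]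
  refine sq_sum_le_card_mul_sum_sq.trans ?_
  gcongr
  exact card_filter_div_eq_le hr k

theorem sqrt_mul_norm_block_succ_le {r : ℕ} (hr : 0 < r) {x : EuclideanSpace ℝ (Fin m)}
    (hx : Antitone x) (hx0 : ∀ i, 0 ≤ x i) (k : ℕ) :
    √r * ‖block r x (k + 1)‖ ≤
      (∑ i with i.val / r = k, x i + ∑ i with i.val / r = k + 1, x i) / 2 := by
  set a := ∑ i with i.val / r = k, x i
  set b := ∑ i with i.val / r = k + 1, x i
  have ha : 0 ≤ a := sum_nonneg fun i _ => hx0 i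
  have hb : 0 ≤ b := sum_nonneg fun i _ => hx0 i
  have hle : ∀ j : Fin m, j.val / r = k + 1 → r * x j ≤ a := by
    intro j hj
    calc r * x j ≤ #{i : Fin m | i.val / r = k} * x j := by
          gcongr
          exacts [hx0 j, le_card_filter_div_eq hr (j := j) (by lia)]
      _ ≤ a := by
          rw [← nsmul_eq_mul]
          refine card_nsmul_le_sum _ _ _ fun i hi => hx (le_of_lt ?_)
          exact Nat.lt_of_div_lt_div (c := r) (by rw [hj, (mem_filter.1 hi).2]; lia)
  have hprod : r * ‖block r x (k + 1)‖ ^ 2 ≤ a * b := by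
    rw [norm_sq_block, mul_sum, mul_sum]
    refine sum_le_sum fun j hj => ?_
    rw [sq, ← mul_assoc]
    exact mul_le_mul_of_nonneg_right (hle j (mem_filter.1 hj).2) (hx0 j)
  refine le_of_sq_le_sq ?_ (by positivity)
  rw [mul_pow, Real.sq_sqrt (by positivity)]
  linarith [sq_nonneg (a - b)]

theorem SparseRIP.eq_zero_of_map_eq_zero {ι : Type*} [Fintype ι] {T : EuclideanSpace ℝ ι →ₗ[ℝ] F}
    {s : ℕ} {δ : ℝ} (hT : SparseRIP T s δ) {x : EuclideanSpace ℝ ι} (hs : #{i | x i ≠ 0} ≤ s)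
    (hx : T x = 0) : x = 0 := by
  have hlower := hT.lower x hs
  rw [hx, norm_zero, zero_pow two_ne_zero] at hlower
  have hsq : ‖x‖ ^ 2 ≤ 0 := nonpos_of_mul_nonpos_right hlower (sub_pos.2 hT.lt_one)
  exact norm_eq_zero.1 (pow_eq_zero_iff two_ne_zero |>.1 (hsq.antisymm (sq_nonneg _)))

theorem norm_sq_map_block_zero_le {T : EuclideanSpace ℝ (Fin m) →ₗ[ℝ] F} (r : ℕ)
    {x : EuclideanSpace ℝ (Fin m)} (hx : T x = 0) :
    ‖T (block r x 0)‖ ^ 2 ≤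
      ∑ k ∈ range m, |inner ℝ (T (block r x 0)) (T (block r x (k + 1)))| := by
  have hsum : ∑ k ∈ range m, T (block r x (k + 1)) + T (block r x 0) = 0 := by
    rw [← sum_range_succ' (fun k => T (block r x k)), ← map_sum, sum_range_block, hx]
  rw [← real_inner_self_eq_norm_sq]
  nth_rw 2 [eq_neg_of_add_eq_zero_right hsum]
  rw [inner_neg_right, inner_sum]
  exact (neg_le_abs _).trans (abs_sum_le_sum_abs _ _)

theorem SparseRIP.sqrt_mul_abs_inner_block_mul_norm_le {T : EuclideanSpace ℝ (Fin m) →ₗ[ℝ] F}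
    {r : ℕ} {δ : ℝ} (hT : SparseRIP T (2 * r) δ) (hr : 0 < r) (x : EuclideanSpace ℝ (Fin m))
    {k l : ℕ} (hkl : k ≠ l) :
    √(1 - δ ^ 2) * |inner ℝ (T (block r x k)) (T (block r x l))| * ‖block r x k‖ ≤
      δ * ‖T (block r x k)‖ ^ 2 * ‖block r x l‖ := by
  have hsupp : ∀ t : ℝ, #{i | (t • block r x k + block r x l) i ≠ 0} ≤ 2 * r := fun t =>
    calc _ ≤ #{i | block r x k i ≠ 0} + #{i | block r x l i ≠ 0} := card_support_smul_add_le t _ _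
      _ ≤ r + r := add_le_add (card_support_block_le hr x k) (card_support_block_le hr x l)
      _ = 2 * r := (two_mul r).symm
  exact sqrt_mul_abs_inner_mul_norm_le hT.nonneg hT.lt_one.le (inner_block_block_of_ne x hkl)
    (fun t => hT.lower _ (hsupp t)) (fun t => hT.upper _ (hsupp t))

theorem SparseRIP.sqrt_mul_norm_block_zero_le {T : EuclideanSpace ℝ (Fin m) →ₗ[ℝ] F} {r : ℕ}
    {δ : ℝ} (hT : SparseRIP T (2 * r) δ) (hr : 0 < r) {x : EuclideanSpace ℝ (Fin m)}
    (hx : T x = 0) :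
    √(1 - δ ^ 2) * ‖block r x 0‖ ≤ δ * ∑ k ∈ range m, ‖block r x (k + 1)‖ := by
  have hδ := hT.nonneg
  rcases eq_or_ne (T (block r x 0)) 0 with hTb | hTb
  · have hcard : #{i | block r x 0 i ≠ 0} ≤ 2 * r :=
      (card_support_block_le hr x 0).trans (Nat.le_mul_of_pos_left r two_pos)
    rw [hT.eq_zero_of_map_eq_zero hcard hTb, norm_zero, mul_zero]
    positivity
  · set N := ‖T (block r x 0)‖ ^ 2
    set c : ℕ → ℝ := fun k => |inner ℝ (T (block r x 0)) (T (block r x (k + 1)))|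
    have hc : ∀ k, √(1 - δ ^ 2) * c k * ‖block r x 0‖ ≤ δ * N * ‖block r x (k + 1)‖ := fun k =>
      hT.sqrt_mul_abs_inner_block_mul_norm_le hr x k.succ_ne_zero.symm
    refine le_of_mul_le_mul_left ?_ (show 0 < N by positivity)
    calc N * (√(1 - δ ^ 2) * ‖block r x 0‖)
        ≤ (∑ k ∈ range m, c k) * (√(1 - δ ^ 2) * ‖block r x 0‖) :=
          mul_le_mul_of_nonneg_right (norm_sq_map_block_zero_le r hx) (by positivity)
      _ = ∑ k ∈ range m, √(1 - δ ^ 2) * c k * ‖block r x 0‖ := by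
          rw [sum_mul]
          exact sum_congr rfl fun k _ => by ring
      _ ≤ ∑ k ∈ range m, δ * N * ‖block r x (k + 1)‖ := sum_le_sum fun k _ => hc k
      _ = N * (δ * ∑ k ∈ range m, ‖block r x (k + 1)‖) := by rw [← mul_sum]; ring

theorem SparseRIP.sqrt_mul_sum_filter_lt_le {T : EuclideanSpace ℝ (Fin m) →ₗ[ℝ] F} {r : ℕ} {δ : ℝ}
    (hT : SparseRIP T (2 * r) δ) {x : EuclideanSpace ℝ (Fin m)} (hx : T x = 0)
    (hanti : Antitone x) (hx0 : ∀ i, 0 ≤ x i) :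
    √(1 - δ ^ 2) * ∑ i with i.val < r, x i ≤
      δ * (∑ i, x i - (∑ i with i.val < r, x i) / 2) := by
  have hδ := hT.nonneg
  rcases r.eq_zero_or_pos with rfl | hr
  · simpa using mul_nonneg hδ (sum_nonneg fun i _ => hx0 i)
  let L : ℕ → ℝ := fun k => ∑ i with i.val / r = k, x i
  have hL0 : ∑ i with i.val < r, x i = L 0 := by simp [L, Nat.div_eq_zero_iff, hr.ne']
  have hLnonneg : ∀ k, 0 ≤ L k := fun k => sum_nonneg fun i _ => hx0 i
  have hLsum : ∑ k ∈ range (m + 1), L k = ∑ i, x i :=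
    sum_fiberwise_of_maps_to (fun i _ => mem_range.2 ((Nat.div_le_self _ _).trans_lt (by lia))) _
  rw [hL0]
  calc √(1 - δ ^ 2) * L 0 ≤ √(1 - δ ^ 2) * (√r * ‖block r x 0‖) := by
        gcongr
        exact sum_filter_div_eq_le_sqrt_mul_norm_block hr x 0
    _ = √r * (√(1 - δ ^ 2) * ‖block r x 0‖) := by ring
    _ ≤ √r * (δ * ∑ k ∈ range m, ‖block r x (k + 1)‖) :=
        mul_le_mul_of_nonneg_left (hT.sqrt_mul_norm_block_zero_le hr hx) (Real.sqrt_nonneg _)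
    _ = δ * ∑ k ∈ range m, √r * ‖block r x (k + 1)‖ := by rw [← mul_sum]; ring
    _ ≤ δ * ∑ k ∈ range m, (L k + L (k + 1)) / 2 := by
        gcongr with k
        exact sqrt_mul_norm_block_succ_le hr hanti hx0 k
    _ ≤ δ * (∑ i, x i - L 0 / 2) := by
        gcongr
        have hinit := sum_range_succ L m
        have htail := sum_range_succ' L m
        rw [← sum_div, sum_add_distrib]
        linarith [hLnonneg m]

end SparseRIP

section RankRIP

variable {n₁ n₂ n₃ : ℕ} {𝒜 : Matrix (Fin n₁) (Fin n₂) ℝ →ₗ[ℝ] (Fin n₃ → ℝ)}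

theorem l2_eq_norm_toLp {p : ℕ} (x : Fin p → ℝ) : l2 x = ‖WithLp.toLp 2 x‖ := by
  simp [l2, EuclideanSpace.norm_eq]

theorem RankRIP.sparseRIP {ι : Type*} [Fintype ι] {s : ℕ} {δ : ℝ} (h𝒜 : RankRIP 𝒜 s δ)
    {u : ι → EuclideanSpace ℝ (Fin n₁)} {v : ι → EuclideanSpace ℝ (Fin n₂)}
    (hu : Orthonormal ℝ u) (hv : Orthonormal ℝ v) :
    SparseRIP ((WithLp.linearEquiv 2 ℝ (Fin n₃ → ℝ)).symm.toLinearMap ∘ₗ 𝒜 ∘ₗ rankOneSum u v ∘ₗ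
      (WithLp.linearEquiv 2 ℝ (ι → ℝ)).toLinearMap) s δ := by
  obtain ⟨hδ0, hδ1, hbound⟩ := h𝒜
  have hsparse : ∀ x : EuclideanSpace ℝ ι, #{i | x i ≠ 0} ≤ s →
      (1 - δ) * ‖x‖ ^ 2 ≤ ‖WithLp.toLp 2 (𝒜 (rankOneSum u v x.ofLp))‖ ^ 2 ∧
      ‖WithLp.toLp 2 (𝒜 (rankOneSum u v x.ofLp))‖ ^ 2 ≤ (1 + δ) * ‖x‖ ^ 2 := fun x hx => by
    rw [← l2_eq_norm_toLp, EuclideanSpace.real_norm_sq_eq, ← sq_frob_rankOneSum hu hv]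
    exact hbound _ ((rank_rankOneSum_le u v x.ofLp).trans hx)
  exact ⟨hδ0, hδ1, fun x hx => (hsparse x hx).1, fun x hx => (hsparse x hx).2⟩

theorem IsThinSVD.sqrt_mul_sum_filter_lt_le {k r : ℕ} {δ : ℝ} (h𝒜 : RankRIP 𝒜 (2 * r) δ)
    {H : Matrix (Fin n₁) (Fin n₂) ℝ} (hH0 : 𝒜 H = 0) {u : Fin k → EuclideanSpace ℝ (Fin n₁)}
    {τ : Fin k → ℝ} {v : Fin k → EuclideanSpace ℝ (Fin n₂)} (hH : IsThinSVD H u τ v) :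
    √(1 - δ ^ 2) * ∑ i with i.val < r, τ i ≤
      δ * (∑ i, τ i - (∑ i with i.val < r, τ i) / 2) := by
  refine (h𝒜.sparseRIP hH.orthonormal_left hH.orthonormal_right).sqrt_mul_sum_filter_lt_le
    (x := WithLp.toLp 2 τ) ?_ hH.antitone hH.nonneg
  simp [← hH.eq_rankOneSum, hH0]

theorem IsThinSVD.sum_pos {k : ℕ} {m n : Type*} [Fintype m] [Fintype n] {X : Matrix m n ℝ}
    {u : Fin k → EuclideanSpace ℝ m} {σ : Fin k → ℝ} {v : Fin k → EuclideanSpace ℝ n}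
    (hX : IsThinSVD X u σ v) (hX0 : X ≠ 0) : 0 < ∑ i, σ i := by
  refine (sum_nonneg fun i _ => hX.nonneg i).lt_of_ne' fun hsum => hX0 ?_
  have hσ : σ = 0 := funext fun i =>
    (sum_eq_zero_iff_of_nonneg fun i _ => hX.nonneg i).1 hsum i (mem_univ i)
  rw [hX.eq_rankOneSum, hσ, map_zero]

theorem IsThinSVD.mul_sum_filter_lt_lt_sum {k r : ℕ} {δ c : ℝ} (h𝒜 : RankRIP 𝒜 (2 * r) δ)
    (hδ : (c - 1 / 2) * δ < √(1 - δ ^ 2)) {H : Matrix (Fin n₁) (Fin n₂) ℝ}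
    (hH0 : 𝒜 H = 0) (hHne : H ≠ 0) {u : Fin k → EuclideanSpace ℝ (Fin n₁)} {τ : Fin k → ℝ}
    {v : Fin k → EuclideanSpace ℝ (Fin n₂)} (hH : IsThinSVD H u τ v) :
    c * ∑ i with i.val < r, τ i < ∑ i, τ i := by
  have hnsp := hH.sqrt_mul_sum_filter_lt_le h𝒜 hH0
  have hpos := hH.sum_pos hHne
  have hhead : 0 ≤ ∑ i with i.val < r, τ i := sum_nonneg fun i _ => hH.nonneg i
  set a := ∑ i with i.val < r, τ i
  by_contra! hle
  have ha : a = 0 := by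
    refine le_antisymm (not_lt.1 fun ha => ?_) hhead
    have hlt := mul_lt_mul_of_pos_right hδ ha
    have hδle := mul_le_mul_of_nonneg_left hle h𝒜.1
    linarith
  rw [ha, mul_zero] at hle
  exact hle.not_gt hpos

end RankRIP

theorem stmt5_general {n₁ n₂ n₃ r : ℕ}
    (𝒜 : Matrix (Fin n₁) (Fin n₂) ℝ →ₗ[ℝ] (Fin n₃ → ℝ)) (δ β L : ℝ) (φ : ℝ → ℝ)
    (hRIP : RankRIP 𝒜 (2 * r) δ) (hφ : ConcaveOn ℝ (Set.Ici 0) φ)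
    (hmono : MonotoneOn φ (Set.Ici 0)) (hL : ∀ t, 0 ≤ t → φ t ≤ φ 0 + L * t) (hβ : 0 ≤ β)
    (hδ : (3 / 2 + 2 * (β * L)) * δ < √(1 - δ ^ 2))
    (X : Matrix (Fin n₁) (Fin n₂) ℝ) (hrank : X.rank ≤ r) :
    ∀ Z : Matrix (Fin n₁) (Fin n₂) ℝ, 𝒜 Z = 𝒜 X → Z ≠ X →
      ∀ σX σZ : Fin (min n₁ n₂) → ℝ, IsSVDVals X σX → IsSVDVals Z σZ →
        (∑ i, σX i) + β * ∑ i, φ (σX i) <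
        (∑ i, σZ i) + β * ∑ i, φ (σZ i) := by
  intro Z h𝒜Z hZX σ ζ hσ hζ
  obtain ⟨H, rfl⟩ : ∃ H, Z = X + H := ⟨Z - X, (add_sub_cancel X Z).symm⟩
  obtain ⟨u, v, hX⟩ := hσ.exists_isThinSVD
  obtain ⟨u'', v'', hZ⟩ := hζ.exists_isThinSVD
  obtain ⟨u', τ, v', hH⟩ := exists_isThinSVD H
  have hL0 : 0 ≤ L := by
    linarith [hmono Set.self_mem_Ici (Set.mem_Ici.2 one_pos.le) one_pos.le, hL 1 one_pos.le]
  have hβL : 0 ≤ β * L := mul_nonneg hβ hL0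
  have hhead := hH.mul_sum_filter_lt_lt_sum (c := 2 * (1 + β * L)) hRIP (by linarith)
    (by simpa using h𝒜Z) (by simpa using hZX)
  have hnuclear := hX.sum_add_sum_le hrank hH hZ
  have hpenalty := mul_le_mul_of_nonneg_left (hX.sum_penalty_le hφ hmono hL hH hZ) hβ
  have hexcess := mul_le_mul_of_nonneg_left hnuclear hβL
  linarith

theorem three_halves_add_mul_lt_sqrt {δ ε : ℝ} (hδ0 : 0 ≤ δ) (hδ : δ ≤ 0.4663)
    (hε : ε ≤ 1 / 20) : (3 / 2 + 2 * ε) * δ < √(1 - δ ^ 2) :=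
  calc (3 / 2 + 2 * ε) * δ ≤ 1.6 * δ := mul_le_mul_of_nonneg_right (by linarith) hδ0
    _ < √(1 - δ ^ 2) := by
      rw [Real.lt_sqrt (by positivity)]
      nlinarith

theorem stmt5 {n₁ n₂ n₃ r : ℕ}
    (𝒜 : Matrix (Fin n₁) (Fin n₂) ℝ →ₗ[ℝ] (Fin n₃ → ℝ)) (δ α β : ℝ)
    (hRIP : RankRIP 𝒜 (2 * r) δ) (hδ : δ ≤ 0.4663)
    (hα : 0 < α) (hβ0 : 0 < β) (hβ : β ≤ 1 / (20 * α))
    (X : Matrix (Fin n₁) (Fin n₂) ℝ) (hrank : X.rank ≤ r) :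
    ∀ Z : Matrix (Fin n₁) (Fin n₂) ℝ, 𝒜 Z = 𝒜 X → Z ≠ X →
      ∀ σX σZ : Fin (min n₁ n₂) → ℝ, IsSVDVals X σX → IsSVDVals Z σZ →
        (∑ i, σX i) + β * ∑ i, phi α (σX i) <
        (∑ i, σZ i) + β * ∑ i, phi α (σZ i) := by
  have hβα : β * α ≤ 1 / 20 := by
    rw [le_div_iff₀ (by positivity)] at hβ
    linarith
  exact stmt5_general 𝒜 δ β α (phi α) hRIP (concaveOn_phi hα.le) (monotoneOn_phi hα.le)
    (fun t ht => phi_le_phi_zero_add_mul hα.le ht) hβ0.le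
    (three_halves_add_mul_lt_sqrt hRIP.1 hδ hβα) X hrank
end
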